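/- arXiv:1310.5240 — 2 statements merged into one kernel-verified Lean document; each statement's English description precedes it below -/
import Mathlib

section
/- For every n ≥ 2 and every k with 0 ≤ k ≤ n and n − k even, a CMDRR(n,k) exists, except that no CMDRR(n,k) exists for (n,k) ∈ {(2,2), (3,3), (4,2), (6,6)}, and with the possible exception of the 31 pairs (n,k) ∈ {(5,3), (6,2), (12,2), (12,6), (12,8), (13,3), (13,7), (14,2), (14,6), (15,3), (15,7), (15,9), (16,2), (16,10), (17,3), (17,7), (17,11), (18,2), (18,10), (19,3), (19,11), (20,2), (20,14), (21,3), (21,11), (22,2), (22,14), (23,15), (24,2), (24,14), (25,15)} for which existence is not asserted. That is: for every n ≥ 2 and 0 ≤ k ≤ n with n − k even and (n,k) not among the 4 + 31 listed pairs, a CMDRR(n,k) exists. -/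
open scoped Classical

/-- A mixed doubles game: an unordered pair of teams, each team being a
(man, woman) pair, for `n` men and `n` women indexed by `Fin n`. -/
abbrev Game (n : ℕ) := Sym2 (Fin n × Fin n)

/-- A game is valid if its two teams have distinct men and distinct women. -/
def Game.valid {n : ℕ} (g : Game n) : Prop :=
  ∃ a b : Fin n × Fin n, g = s(a, b) ∧ a.1 ≠ b.1 ∧ a.2 ≠ b.2

/-- Man `m` plays in game `g`. -/
def Game.manIn {n : ℕ} (m : Fin n) (g : Game n) : Prop :=
  ∃ a b : Fin n × Fin n, g = s(a, b) ∧ a.1 = m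

/-- Woman `w` plays in game `g`. -/
def Game.womanIn {n : ℕ} (w : Fin n) (g : Game n) : Prop :=
  ∃ a b : Fin n × Fin n, g = s(a, b) ∧ a.2 = w

/-- Man `m` and woman `w` are partners (teammates) in game `g`. -/
def Game.partners {n : ℕ} (m w : Fin n) (g : Game n) : Prop :=
  (m, w) ∈ g

/-- Man `m` and woman `w` are opponents in game `g` (on different teams). -/
def Game.opposesMW {n : ℕ} (m w : Fin n) (g : Game n) : Prop :=
  ∃ a b : Fin n × Fin n, g = s(a, b) ∧ a.1 = m ∧ b.2 = w

/-- Men `m` and `m'` are opponents in game `g`. -/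
def Game.opposesMM {n : ℕ} (m m' : Fin n) (g : Game n) : Prop :=
  ∃ a b : Fin n × Fin n, g = s(a, b) ∧ a.1 = m ∧ b.1 = m'

/-- Women `w` and `w'` are opponents in game `g`. -/
def Game.opposesWW {n : ℕ} (w w' : Fin n) (g : Game n) : Prop :=
  ∃ a b : Fin n × Fin n, g = s(a, b) ∧ a.2 = w ∧ b.2 = w'

/-- A complete mixed doubles round robin tournament CMDRR(n,k). -/
structure CMDRR (n k : ℕ) where
  /-- The spouse pairs (man, woman). -/
  spouses : Finset (Fin n × Fin n)
  spouses_card : spouses.card = k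
  spouses_inj1 : ∀ p ∈ spouses, ∀ q ∈ spouses, p.1 = q.1 → p = q
  spouses_inj2 : ∀ p ∈ spouses, ∀ q ∈ spouses, p.2 = q.2 → p = q
  /-- The multiset of games. -/
  games : Multiset (Game n)
  valid : ∀ g ∈ games, g.valid
  /-- (i) no game contains both members of a spouse pair. -/
  no_spouse_game : ∀ g ∈ games, ∀ p ∈ spouses, ¬ (Game.manIn p.1 g ∧ Game.womanIn p.2 g)
  /-- (ii) every non-spouse man-woman pair partners exactly once ... -/
  partners_once : ∀ m w : Fin n, (m, w) ∉ spouses →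
    games.countP (Game.partners m w) = 1
  /-- ... and opposes exactly once. -/
  opposesMW_once : ∀ m w : Fin n, (m, w) ∉ spouses →
    games.countP (Game.opposesMW m w) = 1
  /-- (iii) a spoused man opposes every other man exactly once. -/
  spousedM_opposes : ∀ m ∈ spouses.image Prod.fst, ∀ m' : Fin n, m' ≠ m →
    games.countP (Game.opposesMM m m') = 1
  /-- (iii) a spoused woman opposes every other woman exactly once. -/
  spousedW_opposes : ∀ w ∈ spouses.image Prod.snd, ∀ w' : Fin n, w' ≠ w →
    games.countP (Game.opposesWW w w') = 1
  /-- (iv) an unspoused man opposes exactly one other unspoused man exactly twice,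
  and all other men exactly once. -/
  unspousedM_opposes : ∀ m : Fin n, m ∉ spouses.image Prod.fst →
    ∃ m' : Fin n, m' ≠ m ∧ m' ∉ spouses.image Prod.fst ∧
      games.countP (Game.opposesMM m m') = 2 ∧
      ∀ m'' : Fin n, m'' ≠ m → m'' ≠ m' → games.countP (Game.opposesMM m m'') = 1
  /-- (iv) likewise for unspoused women. -/
  unspousedW_opposes : ∀ w : Fin n, w ∉ spouses.image Prod.snd →
    ∃ w' : Fin n, w' ≠ w ∧ w' ∉ spouses.image Prod.snd ∧
      games.countP (Game.opposesWW w w') = 2 ∧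
      ∀ w'' : Fin n, w'' ≠ w → w'' ≠ w' → games.countP (Game.opposesWW w w'') = 1

/-- A round: a multiset of games in which each player appears at most once. -/
def IsRound {n : ℕ} (r : Multiset (Game n)) : Prop :=
  (∀ m : Fin n, r.countP (Game.manIn m) ≤ 1) ∧
  (∀ w : Fin n, r.countP (Game.womanIn w) ≤ 1)

/-- A full round: all players play if `n` is even; all but exactly one man and
one woman play if `n` is odd. -/
def FullRound {n : ℕ} (r : Multiset (Game n)) : Prop :=
  IsRound r ∧
  ((Even n ∧ (∀ m : Fin n, r.countP (Game.manIn m) = 1) ∧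
      (∀ w : Fin n, r.countP (Game.womanIn w) = 1)) ∨
   (¬ Even n ∧ (∃! m : Fin n, r.countP (Game.manIn m) = 0) ∧
      (∃! w : Fin n, r.countP (Game.womanIn w) = 0)))

/-!
Men and women are both numbered by one set of points, and a single involution `τ` of this set
records the exceptional pairs: man `x` and woman `x` are spouses if `τ x = x`, and otherwise `x` and
`τ x` meet twice within each sex. In a frame the points are divided into groups, and two players
meet, once in each way, exactly if their groups differ. Such frames can be composed: a tournament on
each group, possibly with one additional fixed point common to all groups, completes a frame to a
tournament, and Wilson's construction produces large frames from a transversal design and small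
frames.

A computer search provides small frames and tournaments, and a finite calculation shows that they
suffice for `n < 138`. For `n ≥ 138` write `⌊n / 2⌋ = 5 * m + r` with `m` coprime to `6` and
`4 ≤ r ≤ 2 * m`. Weighting the points of a transversal design with six groups of size `m` by `2` in
five groups, and by `0`, `2` or `4` in the sixth, yields a frame with five groups of size `2 * m`
and one of size `2 * r`. Filling the groups of size `2 * m` can contribute any even number of fixed
points, so that only the extreme values are needed for the group of size `2 * r`.
-/

namespace MixedDoubles

/-! ### Coverage of pairs by multisets of games -/

/-- A game with players in `X` written out as team `(man₁, woman₁)` against team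
`(man₂, woman₂)`; the order of the teams is remembered but plays no role below. -/
structure OrderedGame (X : Type*) where
  man₁ : X
  woman₁ : X
  man₂ : X
  woman₂ : X

/-- The four ways in which two players of a game can be related. -/
inductive Meeting
  | partners
  | mixedOpponents
  | menOpponents
  | womenOpponents
  deriving DecidableEq

instance : Fintype Meeting where
  elems := {.partners, .mixedOpponents, .menOpponents, .womenOpponents}
  complete κ := by cases κ <;> decide

/-- The ordered pairs of players related by `κ` in a game; a man always precedes a woman. -/
def OrderedGame.pairs {X : Type*} (κ : Meeting) (g : OrderedGame X) : List (X × X) :=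
  match κ with
  | .partners => [(g.man₁, g.woman₁), (g.man₂, g.woman₂)]
  | .mixedOpponents => [(g.man₁, g.woman₂), (g.man₂, g.woman₁)]
  | .menOpponents => [(g.man₁, g.man₂), (g.man₂, g.man₁)]
  | .womenOpponents => [(g.woman₁, g.woman₂), (g.woman₂, g.woman₁)]

/-- Relabelling of the players of a game. -/
def OrderedGame.map {X Y : Type*} (f : X → Y) (g : OrderedGame X) : OrderedGame Y :=
  ⟨f g.man₁, f g.woman₁, f g.man₂, f g.woman₂⟩

lemma OrderedGame.pairs_map {X Y : Type*} (f : X → Y) (κ : Meeting) (g : OrderedGame X) :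
    (g.map f).pairs κ = (g.pairs κ).map (Prod.map f f) := by
  cases κ <;> rfl

/-- All pairs of players related by `κ` in the games of `G`, counted with multiplicity. -/
def coverage {X : Type*} (κ : Meeting) (G : Multiset (OrderedGame X)) : Multiset (X × X) :=
  G.bind fun g => g.pairs κ

/-- Some multiset of games makes every pair `p` meet in the way `κ` exactly `s κ p` times. -/
def IsRealizable {X : Type*} [DecidableEq X] (s : Meeting → X × X → ℕ) : Prop :=
  ∃ G : Multiset (OrderedGame X), ∀ κ p, (coverage κ G).count p = s κ p

section Realizable

variable {X Y I : Type*} [DecidableEq X] [DecidableEq Y]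

lemma IsRealizable.add {s t : Meeting → X × X → ℕ} (hs : IsRealizable s)
    (ht : IsRealizable t) : IsRealizable (s + t) := by
  obtain ⟨G, hG⟩ := hs
  obtain ⟨H, hH⟩ := ht
  refine ⟨G + H, fun κ p => ?_⟩
  rw [coverage, Multiset.add_bind, Multiset.count_add]
  exact congrArg₂ (· + ·) (hG κ p) (hH κ p)

lemma IsRealizable.sum [Fintype I] {s : I → Meeting → X × X → ℕ}
    (hs : ∀ i, IsRealizable (s i)) : IsRealizable fun κ p => ∑ i, s i κ p := by
  choose G hG using hs
  refine ⟨Finset.univ.val.bind G, fun κ p => ?_⟩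
  rw [coverage, Multiset.bind_assoc, Multiset.count_bind]
  exact Finset.sum_congr rfl fun i _ => hG i κ p

lemma IsRealizable.map {s : Meeting → X × X → ℕ} (hs : IsRealizable s) {f : X → Y}
    (hf : f.Injective) {t : Meeting → Y × Y → ℕ} (hst : ∀ κ p, t κ (Prod.map f f p) = s κ p)
    (ht : ∀ κ q, q ∉ Set.range (Prod.map f f) → t κ q = 0) : IsRealizable t := by
  obtain ⟨G, hG⟩ := hs
  have coverage_map (κ : Meeting) :
      coverage κ (G.map (OrderedGame.map f)) = (coverage κ G).map (Prod.map f f) := by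
    simp only [coverage, Multiset.bind_map, Multiset.map_bind, OrderedGame.pairs_map,
      Multiset.map_coe]
  refine ⟨G.map (OrderedGame.map f), fun κ q => ?_⟩
  rw [coverage_map]
  by_cases hq : q ∈ Set.range (Prod.map f f)
  · obtain ⟨p, rfl⟩ := hq
    rw [Multiset.count_map_eq_count' _ _ (hf.prodMap hf), hG, hst]
  · rw [ht κ q hq, Multiset.count_eq_zero, Multiset.mem_map]
    exact fun ⟨p, _, hp⟩ => hq ⟨p, hp⟩

end Realizable

/-! ### Frames -/

/-- The coverage of a frame whose groups are the fibres of `γ`: players of different groups meet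
once in each way, players of the same group never. -/
def frameSpec {X I : Type*} [DecidableEq I] (γ : X → I) (_κ : Meeting) (p : X × X) : ℕ :=
  if γ p.1 = γ p.2 then 0 else 1

/-- There is a frame with groups of sizes `w i`. -/
def HasFrame {I : Type*} [DecidableEq I] (w : I → ℕ) : Prop :=
  IsRealizable (frameSpec (Sigma.fst : (Σ i, Fin (w i)) → I))

section Frame

variable {X I J : Type*} [DecidableEq X] [DecidableEq I] [DecidableEq J]

lemma hasFrame_of_isRealizable {γ : X → I} (h : IsRealizable (frameSpec γ)) {w : I → ℕ}
    (e : X ≃ Σ i, Fin (w i)) (he : ∀ x, (e x).1 = γ x) : HasFrame w := by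
  refine h.map e.injective (fun κ p => ?_) (fun κ q hq => ?_)
  · simp only [frameSpec, Prod.map_fst, Prod.map_snd, he]
  · exact absurd (e.surjective.prodMap e.surjective q) hq

lemma hasFrame_of_card_fiber [Fintype X] {γ : X → I} (h : IsRealizable (frameSpec γ))
    {w : I → ℕ} (hw : ∀ i, Fintype.card {x // γ x = i} = w i) : HasFrame w :=
  hasFrame_of_isRealizable h
    ((Equiv.sigmaFiberEquiv γ).symm.trans
      (Equiv.sigmaCongrRight fun i => Fintype.equivFinOfCardEq (hw i)))
    fun _ => rfl

lemma HasFrame.extend {w : I → ℕ} (h : HasFrame w) (f : I ↪ J) {v : J → ℕ}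
    (hv : ∀ i, v (f i) = w i) (hv0 : ∀ j ∉ Set.range f, v j = 0) : HasFrame v := by
  let F : (Σ i, Fin (w i)) → Σ j, Fin (v j) := fun x => ⟨f x.1, Fin.cast (hv x.1).symm x.2⟩
  have F_surj : F.Surjective := by
    rintro ⟨j, y⟩
    by_cases hj : j ∈ Set.range f
    · obtain ⟨i, rfl⟩ := hj
      exact ⟨⟨i, Fin.cast (hv i) y⟩, rfl⟩
    · exact (Fin.cast (hv0 j hj) y).elim0
  have F_inj : F.Injective := by
    rintro ⟨i, x⟩ ⟨i', x'⟩ hF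
    obtain rfl := f.injective (congrArg Sigma.fst hF)
    simpa [F] using hF
  refine IsRealizable.map h F_inj (fun κ p => ?_) fun κ q hq => ?_
  · simp only [frameSpec, F, Prod.map_fst, Prod.map_snd, f.injective.eq_iff]
  · exact absurd (F_surj.prodMap F_surj q) hq

lemma HasFrame.reindex {w : I → ℕ} (h : HasFrame w) (e : I ≃ J) {v : J → ℕ}
    (hv : ∀ i, v (e i) = w i) : HasFrame v :=
  h.extend e.toEmbedding hv fun j hj => (hj (e.surjective j)).elim

end Frame

/-! ### Transversal designs and Wilson's construction -/

/-- `B` lists the blocks of a transversal design with groups indexed by `C`, each group being a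
copy of `Z`; the block `b` meets the group `c` in the point `B b c`. -/
def IsTransversalDesign {ι C Z : Type*} (B : ι → C → Z) : Prop :=
  ∀ ⦃c c' : C⦄, c ≠ c' → ∀ z z' : Z, ∃! b, B b c = z ∧ B b c' = z'

/-- There is a transversal design with `k` groups of size `m`. -/
def HasTransversalDesign (k m : ℕ) : Prop :=
  ∃ (ι : Type) (_ : Finite ι) (B : ι → Fin k → Fin m), IsTransversalDesign B

section TransversalDesign

variable {ι C Z Z' R : Type*} {k m : ℕ}

lemma IsTransversalDesign.map {B : ι → C → Z} (hB : IsTransversalDesign B) (e : Z ≃ Z') :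
    IsTransversalDesign fun b c => e (B b c) := by
  intro c c' hc z z'
  simpa only [← e.eq_symm_apply] using hB hc (e.symm z) (e.symm z')

lemma IsTransversalDesign.hasTransversalDesign {ι Z : Type} [Finite ι] [Fintype Z]
    {B : ι → Fin k → Z} (hB : IsTransversalDesign B) (hm : Fintype.card Z = m) :
    HasTransversalDesign k m :=
  ⟨ι, inferInstance, _, hB.map (Fintype.equivFinOfCardEq hm)⟩

lemma isTransversalDesign_of_isUnit_sub [CommRing R] (μ : Fin k → R)
    (hμ : ∀ ⦃i j⦄, i ≠ j → IsUnit (μ i - μ j)) :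
    IsTransversalDesign fun b : R × R =>
      (Fin.cons b.1 fun i => b.2 + μ i * b.1 : Fin (k + 1) → R) := by
  intro c c' hc z z'
  induction c using Fin.cases with
  | zero =>
    induction c' using Fin.cases with
    | zero => exact absurd rfl hc
    | succ j =>
      refine ⟨(z, z' - μ j * z), ⟨rfl, sub_add_cancel _ _⟩, ?_⟩
      rintro ⟨x, y⟩ ⟨rfl, rfl⟩
      simp
  | succ i =>
    induction c' using Fin.cases with
    | zero =>
      refine ⟨(z', z - μ i * z'), ⟨sub_add_cancel _ _, rfl⟩, ?_⟩
      rintro ⟨x, y⟩ ⟨rfl, rfl⟩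
      simp
    | succ j =>
      obtain ⟨u, hu⟩ := hμ fun h => hc (congrArg Fin.succ h)
      have hu' : (μ i - μ j) * ↑u⁻¹ = 1 := by rw [← hu, Units.mul_inv]
      refine ⟨(↑u⁻¹ * (z - z'), z - μ i * (↑u⁻¹ * (z - z'))), ⟨sub_add_cancel _ _, ?_⟩, ?_⟩
      · simp only [Fin.cons_succ]
        linear_combination (z' - z) * hu'
      · rintro ⟨x, y⟩ ⟨rfl, rfl⟩
        simp only [Fin.cons_succ, Prod.mk.injEq]
        constructor
        · linear_combination (-x) * hu'
        · linear_combination (μ i * x) * hu'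

lemma hasTransversalDesign_zmod [NeZero m] (hk : k ≤ m.minFac) :
    HasTransversalDesign (k + 1) m := by
  refine (isTransversalDesign_of_isUnit_sub (fun i : Fin k => ((i : ℕ) : ZMod m))
    fun i j hij => ?_).hasTransversalDesign (ZMod.card m)
  wlog h : j < i generalizing i j
  · rw [← neg_sub, IsUnit.neg_iff]
    exact this j i hij.symm (lt_of_le_of_ne (not_lt.1 h) hij)
  rw [← Nat.cast_sub (Fin.le_def.1 h.le), ZMod.isUnit_iff_coprime]
  exact (Nat.coprime_of_lt_minFac (Nat.sub_ne_zero_of_lt h) (by omega)).symm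

lemma hasTransversalDesign_primePow {p e : ℕ} [Fact p.Prime] (he : e ≠ 0) (hk : k ≤ p ^ e) :
    HasTransversalDesign (k + 1) (p ^ e) := by
  have : Fintype (GaloisField p e) := Fintype.ofFinite _
  have card_eq : Fintype.card (GaloisField p e) = p ^ e := by
    rw [← Nat.card_eq_fintype_card, GaloisField.card p e he]
  obtain ⟨μ⟩ : Nonempty (Fin k ↪ GaloisField p e) :=
    Function.Embedding.nonempty_of_card_le (by rwa [Fintype.card_fin, card_eq])
  exact (isTransversalDesign_of_isUnit_sub μ fun i j hij =>
    (sub_ne_zero.2 (μ.injective.ne hij)).isUnit).hasTransversalDesign card_eq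

end TransversalDesign

/-- Wilson's construction: every block is replaced by a frame on the copies of its points, a point
`z` of the group `c` having `w c z` copies. -/
theorem HasFrame.wilson {ι C Z : Type*} [Finite ι] [Fintype Z] [DecidableEq C]
    {B : ι → C → Z} (hB : IsTransversalDesign B) (w : C → Z → ℕ)
    (h : ∀ b, HasFrame fun c => w c (B b c)) : HasFrame fun c => ∑ z, w c z := by
  have := Fintype.ofFinite ι
  let γ : (Σ c, Σ z, Fin (w c z)) → C := Sigma.fst
  let onBlock (b : ι) (x : Σ c, Σ z, Fin (w c z)) : Prop := x.2.1 = B b x.1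
  have block_realizable (b : ι) : IsRealizable fun κ (p : (Σ c, Σ z, Fin (w c z)) × _) =>
      if onBlock b p.1 ∧ onBlock b p.2 then frameSpec γ κ p else 0 := by
    let f (x : Σ c, Fin (w c (B b c))) : Σ c, Σ z, Fin (w c z) := ⟨x.1, B b x.1, x.2⟩
    have mem_range (x : Σ c, Σ z, Fin (w c z)) (hx : onBlock b x) : x ∈ Set.range f := by
      obtain ⟨c, z, y⟩ := x
      obtain rfl : z = B b c := hx
      exact ⟨⟨c, y⟩, rfl⟩
    refine IsRealizable.map (h b) (f := f) ?_ (fun κ p => if_pos ⟨rfl, rfl⟩) fun κ q hq => ?_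
    · rintro ⟨c, y⟩ ⟨c', y'⟩ hf
      obtain rfl : c = c' := congrArg Sigma.fst hf
      simpa [f] using hf
    · refine if_neg fun ⟨h₁, h₂⟩ => hq ?_
      rw [Set.range_prodMap]
      exact ⟨mem_range _ h₁, mem_range _ h₂⟩
  have sum_blocks (κ : Meeting) (p : (Σ c, Σ z, Fin (w c z)) × (Σ c, Σ z, Fin (w c z))) :
      ∑ b, (if onBlock b p.1 ∧ onBlock b p.2 then frameSpec γ κ p else 0) = frameSpec γ κ p := by
    by_cases hp : γ p.1 = γ p.2
    · simp [frameSpec, hp]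
    · obtain ⟨b, ⟨h₁, h₂⟩, hb⟩ := hB hp p.1.2.1 p.2.2.1
      rw [Fintype.sum_eq_single b fun b' hb' => if_neg fun h' => hb' (hb b' ⟨h'.1.symm, h'.2.symm⟩)]
      exact if_pos ⟨h₁.symm, h₂.symm⟩
  have frame_realizable : IsRealizable (frameSpec γ) := by
    simpa only [sum_blocks] using IsRealizable.sum block_realizable
  exact hasFrame_of_isRealizable frame_realizable
    (Equiv.sigmaCongrRight fun c => Fintype.equivFinOfCardEq (by simp)) fun _ => rfl

/-! ### Tournaments -/

/-- The coverage of a tournament in which man `x` is the spouse of woman `x` for each fixed point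
`x` of the involution `τ`, and any other `x` meets `τ x` twice as an opponent of the same sex. -/
def tournamentSpec {X : Type*} [DecidableEq X] (τ : X → X) (κ : Meeting) (p : X × X) : ℕ :=
  match κ with
  | .partners | .mixedOpponents => if p.1 = p.2 ∧ τ p.1 = p.1 then 0 else 1
  | .menOpponents | .womenOpponents => if p.1 = p.2 then 0 else if τ p.1 = p.2 then 2 else 1

/-- There is a CMDRR(`n`, `k`) whose men and women can be numbered in such a way that the spouse of
a player, or the opponent met twice, is given for both sexes by the same involution. -/
def HasTournament (n k : ℕ) : Prop :=
  ∃ τ : Fin n → Fin n, τ.Involutive ∧ Finset.card {x | τ x = x} = k ∧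
    IsRealizable (tournamentSpec τ)

section Tournament

variable {X Y : Type*} [DecidableEq X] [DecidableEq Y]

lemma tournamentSpec_map {f : X → Y} (hf : f.Injective) {τ : X → X} {υ : Y → Y}
    (h : Function.Semiconj f τ υ) (κ : Meeting) (p : X × X) :
    tournamentSpec υ κ (Prod.map f f p) = tournamentSpec τ κ p := by
  cases κ <;> simp only [tournamentSpec, Prod.map_fst, Prod.map_snd, ← h.eq, hf.eq_iff]

lemma isRealizable_tournamentSpec_of_equiv (e : X ≃ Y) {τ : X → X} {υ : Y → Y}
    (h : Function.Semiconj e τ υ) (hτ : IsRealizable (tournamentSpec τ)) :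
    IsRealizable (tournamentSpec υ) :=
  hτ.map e.injective (tournamentSpec_map e.injective h) fun _ q hq =>
    absurd (e.surjective.prodMap e.surjective q) hq

lemma hasTournament_of_isRealizable [Fintype X] {τ : X → X} (hτ : τ.Involutive)
    (h : IsRealizable (tournamentSpec τ)) :
    HasTournament (Fintype.card X) (Finset.card {x | τ x = x}) := by
  let e := Fintype.equivFin X
  have semiconj : Function.Semiconj e τ (e ∘ τ ∘ e.symm) := fun x => by simp
  refine ⟨e ∘ τ ∘ e.symm, fun x => by simp [hτ (e.symm x)], ?_,
    isRealizable_tournamentSpec_of_equiv e semiconj h⟩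
  refine Finset.card_equiv e.symm fun x => ?_
  simp [← e.eq_symm_apply]

lemma card_filter_sum_map_id [Fintype X] [Fintype Y] (τ : X → X) :
    Finset.card {x | Sum.map τ (id : Y → Y) x = x} =
      Finset.card {x | τ x = x} + Fintype.card Y := by
  simp only [Finset.card_filter, Fintype.sum_sum_type, Sum.map_inl, Sum.map_inr, Sum.inl.injEq,
    id_eq, if_true, Finset.sum_const, Finset.card_univ, smul_eq_mul, mul_one]

lemma card_filter_sigma_map_id {I : Type*} [Fintype I] [DecidableEq I] {V : I → Type*}
    [∀ i, Fintype (V i)] [∀ i, DecidableEq (V i)] (τ : ∀ i, V i → V i) :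
    Finset.card {x : Σ i, V i | Sigma.map id τ x = x} = ∑ i, Finset.card {x | τ i x = x} := by
  rw [Finset.card_filter, Fintype.sum_sigma]
  simp only [Finset.card_filter, Sigma.map, id_eq, Sigma.mk.injEq, true_and, heq_eq_eq]

lemma card_filter_of_semiconj [Fintype X] [Fintype Y] (e : X ≃ Y) {τ : X → X} {υ : Y → Y}
    (h : Function.Semiconj e τ υ) :
    Finset.card {x | τ x = x} = Finset.card {y | υ y = y} :=
  Finset.card_equiv e fun x => by simp [← h.eq]

/-- Renumbering moves `e` of the fixed points into a separate summand. -/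
lemma HasTournament.exists_sum_map_id {v k e : ℕ} (h : HasTournament (v + e) (k + e)) :
    ∃ τ : Fin v → Fin v, τ.Involutive ∧ Finset.card {x | τ x = x} = k ∧
      IsRealizable (tournamentSpec (Sum.map τ (id : Fin e → Fin e))) := by
  obtain ⟨υ, υ_inv, υ_card, hυ⟩ := h
  obtain ⟨S, hS, S_card⟩ := Finset.exists_subset_card_eq (υ_card ▸ Nat.le_add_left e k)
  have compl_card : Fintype.card {x // x ∉ S} = v := by
    rw [Fintype.card_subtype_compl, Fintype.card_fin, Fintype.card_coe, S_card, Nat.add_sub_cancel]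
  let f : Fin v ⊕ Fin e ≃ Fin (v + e) :=
    ((Fintype.equivFinOfCardEq compl_card).symm.sumCongr (S.equivFinOfCardEq S_card).symm).trans
      ((Equiv.sumComm _ _).trans (Equiv.sumCompl (· ∈ S)))
  have υ_inr (j : Fin e) : υ (f (.inr j)) = f (.inr j) :=
    (Finset.mem_filter.1 (hS ((S.equivFinOfCardEq S_card).symm j).2)).2
  have υ_inl (i : Fin v) : ∃ i', υ (f (.inl i)) = f (.inl i') := by
    obtain ⟨i' | j, hx⟩ := f.surjective (υ (f (.inl i)))
    · exact ⟨i', hx.symm⟩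
    · have := f.injective ((υ_inv _).symm.trans ((congrArg υ hx).symm.trans (υ_inr j)))
      exact absurd this Sum.inl_ne_inr
  choose τ hτ using υ_inl
  have semiconj : Function.Semiconj f (Sum.map τ id) υ := by
    rintro (i | j)
    exacts [(hτ i).symm, (υ_inr j).symm]
  refine ⟨τ, fun i => ?_, ?_, isRealizable_tournamentSpec_of_equiv f.symm
    (semiconj.inverse_left f.left_inv f.right_inv) hυ⟩
  · exact Sum.inl_injective (f.injective (by rw [← hτ, ← hτ, υ_inv]))
  · have := (card_filter_of_semiconj f semiconj).trans υ_card
    rw [card_filter_sum_map_id, Fintype.card_fin] at this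
    exact Nat.add_right_cancel this

end Tournament

section Fill

variable {I E : Type*} {V : I → Type*}

/-- The inclusion of the `i`-th group of a frame, together with the points `E` outside the frame,
into the set of all points. -/
def groupInclusion (V : I → Type*) (E : Type*) (i : I) : V i ⊕ E → (Σ i, V i) ⊕ E :=
  Sum.map (Sigma.mk i) id

lemma groupInclusion_injective (i : I) : (groupInclusion V E i).Injective :=
  sigma_mk_injective.sumMap Function.injective_id

lemma groupInclusion_semiconj (τ : ∀ i, V i → V i) (i : I) :
    Function.Semiconj (groupInclusion V E i) (Sum.map (τ i) id)
      (Sum.map (Sigma.map id τ) id) := by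
  rintro (x | y) <;> rfl

lemma inl_mem_range_groupInclusion {i : I} {x : Σ i, V i} :
    .inl x ∈ Set.range (groupInclusion V E i) ↔ x.1 = i := by
  constructor
  · rintro ⟨x' | y, hx⟩
    · exact congrArg Sigma.fst (Sum.inl_injective hx).symm
    · exact absurd hx Sum.inr_ne_inl
  · rintro rfl
    exact ⟨.inl x.2, rfl⟩

lemma inr_mem_range_groupInclusion (i : I) (y : E) : .inr y ∈ Set.range (groupInclusion V E i) :=
  ⟨.inr y, rfl⟩

variable [DecidableEq I] [DecidableEq E] [∀ i, DecidableEq (V i)]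

/-- The part of `tournamentSpec υ` that concerns the players in `V i` and in `E`. -/
noncomputable def groupSpec (υ : (Σ i, V i) ⊕ E → (Σ i, V i) ⊕ E) (i : I) (κ : Meeting)
    (p : ((Σ i, V i) ⊕ E) × ((Σ i, V i) ⊕ E)) : ℕ :=
  if p.1 ∈ Set.range (groupInclusion V E i) ∧ p.2 ∈ Set.range (groupInclusion V E i) then
    tournamentSpec υ κ p
  else 0

lemma isRealizable_groupSpec {τ : ∀ i, V i → V i} {i : I}
    (h : IsRealizable (tournamentSpec (Sum.map (τ i) (id : E → E)))) :
    IsRealizable (groupSpec (Sum.map (Sigma.map id τ) (id : E → E)) i) := by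
  refine h.map (groupInclusion_injective i) (fun κ p => ?_) fun κ q hq => ?_
  · rw [← tournamentSpec_map (groupInclusion_injective i) (groupInclusion_semiconj τ i)]
    exact if_pos ⟨⟨p.1, rfl⟩, ⟨p.2, rfl⟩⟩
  · rw [Set.range_prodMap, Set.mem_prod] at hq
    exact if_neg hq

/-- The coverage of a frame on `Σ i, V i`, with `E` left uncovered. -/
def betweenGroupsSpec (κ : Meeting) (p : ((Σ i, V i) ⊕ E) × ((Σ i, V i) ⊕ E)) : ℕ :=
  match p with
  | (.inl x, .inl y) => frameSpec (Sigma.fst : (Σ i, V i) → I) κ (x, y)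
  | _ => 0

lemma isRealizable_betweenGroupsSpec
    (h : IsRealizable (frameSpec (Sigma.fst : (Σ i, V i) → I))) :
    IsRealizable (betweenGroupsSpec : Meeting → ((Σ i, V i) ⊕ E) × ((Σ i, V i) ⊕ E) → ℕ) := by
  refine h.map (f := Sum.inl) Sum.inl_injective (fun κ p => rfl) ?_
  rintro κ ⟨x | x, y | y⟩ hq
  · exact absurd ⟨(x, y), rfl⟩ hq
  all_goals rfl

lemma betweenGroupsSpec_add_sum_groupSpec [Fintype I] [Subsingleton E] (τ : ∀ i, V i → V i)
    (κ : Meeting) (p : ((Σ i, V i) ⊕ E) × ((Σ i, V i) ⊕ E)) :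
    betweenGroupsSpec κ p + ∑ i, groupSpec (Sum.map (Sigma.map id τ) id) i κ p =
      tournamentSpec (Sum.map (Sigma.map id τ) id) κ p := by
  obtain ⟨x | y, x' | y'⟩ := p
  · simp only [groupSpec, inl_mem_range_groupInclusion]
    by_cases h : x.1 = x'.1
    · rw [Fintype.sum_eq_single x.1 fun i hi => if_neg fun h' => hi h'.1.symm,
        if_pos ⟨rfl, h.symm⟩]
      simp only [betweenGroupsSpec, frameSpec, h, if_true, zero_add]
    · rw [Finset.sum_eq_zero fun i _ => if_neg fun h' => h (h'.1.trans h'.2.symm)]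
      have hxx' : x ≠ x' := ne_of_apply_ne Sigma.fst h
      have hτxx' : Sigma.map id τ x ≠ x' := ne_of_apply_ne Sigma.fst h
      cases κ <;> simp [betweenGroupsSpec, frameSpec, tournamentSpec, h, hxx', hτxx']
  · simp only [groupSpec, inl_mem_range_groupInclusion, inr_mem_range_groupInclusion, and_true,
      Finset.sum_ite_eq, Finset.mem_univ, if_true, betweenGroupsSpec, zero_add]
  · simp only [groupSpec, inl_mem_range_groupInclusion, inr_mem_range_groupInclusion, true_and,
      Finset.sum_ite_eq, Finset.mem_univ, if_true, betweenGroupsSpec, zero_add]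
  · obtain rfl := Subsingleton.elim y y'
    cases κ <;> simp [groupSpec, betweenGroupsSpec, tournamentSpec]

/-- The groups of a frame, each extended by the same `ε ≤ 1` new fixed points, are filled with
tournaments. -/
theorem HasFrame.fill [Fintype I] {w j : I → ℕ} {ε : ℕ} (hε : ε ≤ 1)
    (hF : HasFrame w) (hT : ∀ i, HasTournament (w i + ε) (j i + ε)) :
    HasTournament (∑ i, w i + ε) (∑ i, j i + ε) := by
  choose τ τ_inv τ_card hτ using fun i => (hT i).exists_sum_map_id
  have : Subsingleton (Fin ε) := Fin.subsingleton_iff_le_one.2 hε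
  have υ_inv : (Sum.map (Sigma.map id τ) (id : Fin ε → Fin ε)).Involutive := by
    rintro (⟨i, x⟩ | y)
    · simp only [Sum.map_inl, Sigma.map, id_eq, τ_inv i x]
    · rfl
  have realizable := (isRealizable_betweenGroupsSpec (E := Fin ε) hF).add
    (IsRealizable.sum fun i => isRealizable_groupSpec (hτ i))
  simp only [Pi.add_def, betweenGroupsSpec_add_sum_groupSpec] at realizable
  simpa only [Fintype.card_sum, Fintype.card_sigma, Fintype.card_fin, card_filter_sum_map_id,
    card_filter_sigma_map_id, τ_card] using hasTournament_of_isRealizable υ_inv realizable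

end Fill

/-! ### From involutions to spouse pairs -/

/-- The unordered game of the players `Fin n` underlying an ordered one. -/
def OrderedGame.toGame {n : ℕ} (g : OrderedGame (Fin n)) : Game n :=
  s((g.man₁, g.woman₁), (g.man₂, g.woman₂))

/-- The relation `κ` between players `x` and `y` of a game. -/
def Meeting.Holds {n : ℕ} (κ : Meeting) (x y : Fin n) (g : Game n) : Prop :=
  match κ with
  | .partners => g.partners x y
  | .mixedOpponents => g.opposesMW x y
  | .menOpponents => g.opposesMM x y
  | .womenOpponents => g.opposesWW x y

section ToCMDRR

variable {n k : ℕ} {G : Multiset (OrderedGame (Fin n))} {τ : Fin n → Fin n}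

lemma exists_toGame_eq_iff {P : Fin n × Fin n → Fin n × Fin n → Prop} (g : OrderedGame (Fin n)) :
    (∃ a b, g.toGame = s(a, b) ∧ P a b) ↔
      P (g.man₁, g.woman₁) (g.man₂, g.woman₂) ∨ P (g.man₂, g.woman₂) (g.man₁, g.woman₁) := by
  constructor
  · rintro ⟨a, b, hg, hP⟩
    obtain ⟨rfl, rfl⟩ | ⟨rfl, rfl⟩ := Sym2.eq_iff.1 hg
    exacts [.inl hP, .inr hP]
  · rintro (hP | hP)
    exacts [⟨_, _, rfl, hP⟩, ⟨_, _, Sym2.eq_swap, hP⟩]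

lemma holds_toGame_iff (κ : Meeting) (x y : Fin n) (g : OrderedGame (Fin n)) :
    κ.Holds x y g.toGame ↔ (x, y) ∈ g.pairs κ := by
  cases κ
  · simp [Meeting.Holds, Game.partners, OrderedGame.toGame, OrderedGame.pairs]
  all_goals
    refine (exists_toGame_eq_iff g).trans ?_
    simp only [OrderedGame.pairs, List.mem_cons, List.not_mem_nil, or_false, Prod.mk.injEq, eq_comm]

lemma mem_coverage {X : Type*} {G : Multiset (OrderedGame X)} {κ : Meeting} {p : X × X} :
    p ∈ coverage κ G ↔ ∃ g ∈ G, p ∈ g.pairs κ := by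
  simp only [coverage, Multiset.mem_bind, Multiset.mem_coe]

lemma notMem_pairs_of_spec_eq_zero
    (hG : ∀ κ p, (coverage κ G).count p = tournamentSpec τ κ p) {κ : Meeting}
    {p : Fin n × Fin n} (h : tournamentSpec τ κ p = 0) {g : OrderedGame (Fin n)} (hg : g ∈ G) :
    p ∉ g.pairs κ := fun hp =>
  Multiset.count_eq_zero.1 ((hG κ p).trans h) (mem_coverage.2 ⟨g, hg, hp⟩)

lemma men_ne (hG : ∀ κ p, (coverage κ G).count p = tournamentSpec τ κ p)
    {g : OrderedGame (Fin n)} (hg : g ∈ G) : g.man₁ ≠ g.man₂ := fun h =>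
  notMem_pairs_of_spec_eq_zero hG (κ := .menOpponents) (p := (g.man₁, g.man₂)) (if_pos h) hg
    List.mem_cons_self

lemma women_ne (hG : ∀ κ p, (coverage κ G).count p = tournamentSpec τ κ p)
    {g : OrderedGame (Fin n)} (hg : g ∈ G) : g.woman₁ ≠ g.woman₂ := fun h =>
  notMem_pairs_of_spec_eq_zero hG (κ := .womenOpponents) (p := (g.woman₁, g.woman₂)) (if_pos h) hg
    List.mem_cons_self

lemma OrderedGame.nodup_pairs {X : Type*} {g : OrderedGame X} (hm : g.man₁ ≠ g.man₂)
    (hw : g.woman₁ ≠ g.woman₂) (κ : Meeting) : (g.pairs κ).Nodup := by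
  cases κ <;> simp [OrderedGame.pairs, hm, hw]

lemma sum_map_ite_eq_countP {α : Type*} (s : Multiset α) (P : α → Prop) [DecidablePred P] :
    (s.map fun a => if P a then 1 else 0).sum = s.countP P := by
  induction s using Multiset.induction_on with
  | empty => rfl
  | cons a s ih => rw [Multiset.map_cons, Multiset.sum_cons, ih, Multiset.countP_cons, add_comm]

lemma countP_holds (hG : ∀ κ p, (coverage κ G).count p = tournamentSpec τ κ p) (κ : Meeting)
    (x y : Fin n) :
    (G.map OrderedGame.toGame).countP (κ.Holds x y) = tournamentSpec τ κ (x, y) := by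
  have count_pairs : ∀ g ∈ G,
      (g.pairs κ : Multiset (Fin n × Fin n)).count (x, y) =
        if κ.Holds x y g.toGame then 1 else 0 := fun g hg => by
    simp only [holds_toGame_iff, ← Multiset.mem_coe]
    split_ifs with h
    · exact Multiset.count_eq_one_of_mem (g.nodup_pairs (men_ne hG hg) (women_ne hG hg) κ) h
    · exact Multiset.count_eq_zero.2 h
  rw [← hG, coverage, Multiset.count_bind, Multiset.countP_map, ← Multiset.countP_eq_card_filter,
    Multiset.map_congr rfl count_pairs, sum_map_ite_eq_countP]

/-- The spouse pairs given by the fixed points of `τ`. -/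
def fixedPairs (τ : Fin n → Fin n) : Finset (Fin n × Fin n) :=
  {p | p.1 = p.2 ∧ τ p.1 = p.1}

lemma mem_fixedPairs {p : Fin n × Fin n} : p ∈ fixedPairs τ ↔ p.1 = p.2 ∧ τ p.1 = p.1 := by
  simp [fixedPairs]

lemma card_fixedPairs : (fixedPairs τ).card = Finset.card {x | τ x = x} := by
  refine (Finset.card_bij (fun x _ => (x, x)) (fun x hx => ?_) (fun x _ y _ h => ?_) ?_).symm
  · exact mem_fixedPairs.2 ⟨rfl, (Finset.mem_filter.1 hx).2⟩
  · exact congrArg Prod.fst h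
  · rintro ⟨x, y⟩ h
    obtain ⟨rfl : x = y, hx⟩ := mem_fixedPairs.1 h
    exact ⟨x, Finset.mem_filter.2 ⟨Finset.mem_univ x, hx⟩, rfl⟩

lemma mem_image_fst_fixedPairs {x : Fin n} : x ∈ (fixedPairs τ).image Prod.fst ↔ τ x = x := by
  simp [mem_fixedPairs]

lemma mem_image_snd_fixedPairs {x : Fin n} : x ∈ (fixedPairs τ).image Prod.snd ↔ τ x = x := by
  simp only [Finset.mem_image, mem_fixedPairs, Prod.exists]
  constructor
  · rintro ⟨_, _, ⟨rfl, hx⟩, rfl⟩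
    exact hx
  · exact fun hx => ⟨x, x, ⟨rfl, hx⟩, rfl⟩

lemma no_fixed_player_twice (hG : ∀ κ p, (coverage κ G).count p = tournamentSpec τ κ p)
    {g : OrderedGame (Fin n)} (hg : g ∈ G) {x : Fin n} (hx : τ x = x) :
    ¬ (g.toGame.manIn x ∧ g.toGame.womanIn x) := by
  rintro ⟨man, woman⟩
  have not_partners := notMem_pairs_of_spec_eq_zero hG (κ := .partners) (p := (x, x))
    (if_pos ⟨rfl, hx⟩) hg
  have not_opponents := notMem_pairs_of_spec_eq_zero hG (κ := .mixedOpponents) (p := (x, x))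
    (if_pos ⟨rfl, hx⟩) hg
  simp only [OrderedGame.pairs, List.mem_cons, Prod.mk.injEq, List.not_mem_nil, or_false,
    @eq_comm _ x] at not_partners not_opponents
  have man_eq := (exists_toGame_eq_iff (P := fun a _ => a.1 = x) g).1 man
  have woman_eq := (exists_toGame_eq_iff (P := fun a _ => a.2 = x) g).1 woman
  tauto

/-- The tournament realizing the specification of an involution. -/
def toCMDRR (τ_inv : τ.Involutive) (τ_card : Finset.card {x | τ x = x} = k)
    (hG : ∀ κ p, (coverage κ G).count p = tournamentSpec τ κ p) : CMDRR n k where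
  spouses := fixedPairs τ
  spouses_card := card_fixedPairs.trans τ_card
  spouses_inj1 p hp q hq h :=
    Prod.ext h ((mem_fixedPairs.1 hp).1.symm.trans (h.trans (mem_fixedPairs.1 hq).1))
  spouses_inj2 p hp q hq h :=
    Prod.ext ((mem_fixedPairs.1 hp).1.trans (h.trans (mem_fixedPairs.1 hq).1.symm)) h
  games := G.map OrderedGame.toGame
  valid := by
    intro _ h
    obtain ⟨g, hg, rfl⟩ := Multiset.mem_map.1 h
    exact ⟨_, _, rfl, men_ne hG hg, women_ne hG hg⟩
  no_spouse_game := by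
    rintro _ h ⟨x, y⟩ hp
    obtain ⟨g, hg, rfl⟩ := Multiset.mem_map.1 h
    obtain ⟨rfl : x = y, hx⟩ := mem_fixedPairs.1 hp
    exact no_fixed_player_twice hG hg hx
  partners_once m w h :=
    (countP_holds hG .partners m w).trans (if_neg fun h' => h (mem_fixedPairs.2 h'))
  opposesMW_once m w h :=
    (countP_holds hG .mixedOpponents m w).trans (if_neg fun h' => h (mem_fixedPairs.2 h'))
  spousedM_opposes m hm m' hm' := by
    refine (countP_holds hG .menOpponents m m').trans ?_
    simp only [tournamentSpec, mem_image_fst_fixedPairs.1 hm, hm'.symm, if_false]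
  spousedW_opposes w hw w' hw' := by
    refine (countP_holds hG .womenOpponents w w').trans ?_
    simp only [tournamentSpec, mem_image_snd_fixedPairs.1 hw, hw'.symm, if_false]
  unspousedM_opposes m hm := by
    rw [mem_image_fst_fixedPairs] at hm
    refine ⟨τ m, hm, fun h => ?_, ?_, fun m'' h₁ h₂ => ?_⟩
    · rw [mem_image_fst_fixedPairs, τ_inv] at h
      exact hm h.symm
    · exact (countP_holds hG .menOpponents m _).trans ((if_neg (Ne.symm hm)).trans (if_pos rfl))
    · exact (countP_holds hG .menOpponents m _).trans ((if_neg h₁.symm).trans (if_neg h₂.symm))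
  unspousedW_opposes w hw := by
    rw [mem_image_snd_fixedPairs] at hw
    refine ⟨τ w, hw, fun h => ?_, ?_, fun w'' h₁ h₂ => ?_⟩
    · rw [mem_image_snd_fixedPairs, τ_inv] at h
      exact hw h.symm
    · exact (countP_holds hG .womenOpponents w _).trans ((if_neg (Ne.symm hw)).trans (if_pos rfl))
    · exact (countP_holds hG .womenOpponents w _).trans ((if_neg h₁.symm).trans (if_neg h₂.symm))

lemma HasTournament.nonempty_cmdrr (h : HasTournament n k) : Nonempty (CMDRR n k) :=
  let ⟨_, τ_inv, τ_card, _, hG⟩ := h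
  ⟨toCMDRR τ_inv τ_card hG⟩

end ToCMDRR

/-! ### Frames given by lists of group sizes -/

/-- There is a frame whose groups have the sizes listed in `l`. -/
def HasFrameOfType (l : List ℕ) : Prop := HasFrame l.get

lemma hasFrameOfType_ofFn {n : ℕ} {w : Fin n → ℕ} :
    HasFrameOfType (List.ofFn w) ↔ HasFrame w :=
  ⟨fun h => h.reindex (finCongr List.length_ofFn) fun i => (List.get_ofFn w i).symm,
    fun h => h.reindex (finCongr List.length_ofFn).symm fun _ => List.get_ofFn w _⟩

lemma HasFrameOfType.fill {l j : List ℕ} {ε : ℕ} (hε : ε ≤ 1) (h : HasFrameOfType l)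
    (hT : List.Forall₂ (fun w j => HasTournament (w + ε) (j + ε)) l j) :
    HasTournament (l.sum + ε) (j.sum + ε) := by
  have sum_get (l : List ℕ) : ∑ i, l.get i = l.sum := by
    rw [← List.sum_ofFn, List.ofFn_get]
  have tournament := HasFrame.fill hε h (j := fun i => j.get (i.cast hT.length_eq))
    fun i => hT.get i.2 (hT.length_eq ▸ i.2)
  rwa [show ∑ i : Fin l.length, j.get (i.cast hT.length_eq) = _ from
    (finCongr hT.length_eq).sum_comp j.get, sum_get, sum_get] at tournament

/-! ### Explicit designs -/

/-- The weights that represent pairs as positions of base-`4096` digits: a multiset of fewer than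
`4096` pairs is determined by the sum of its weights. -/
def pairWeight {n : ℕ} (p : Fin n × Fin n) : ℕ := 2 ^ (12 * (finProdFinEquiv p).val)

/-- The games `G` cover every pair as often as `s` demands, in a form that a computer can check with
few operations on large numbers. -/
def Covers {n : ℕ} (G : List (OrderedGame (Fin n))) (s : Meeting → Fin n × Fin n → ℕ) : Prop :=
  2 * G.length < 4096 ∧ ∀ κ, ((G.flatMap (OrderedGame.pairs κ)).map pairWeight).sum =
    ∑ x, ∑ y, s κ (x, y) * pairWeight (x, y)

instance {n : ℕ} (G : List (OrderedGame (Fin n))) (s : Meeting → Fin n × Fin n → ℕ) :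
    Decidable (Covers G s) :=
  inferInstanceAs (Decidable (_ ∧ _))

lemma count_eq_of_sum_pairWeight_eq {n : ℕ} {M : Multiset (Fin n × Fin n)}
    {s : Fin n × Fin n → ℕ} (hM : M.card < 4096) (hs : ∀ p, s p < 4096)
    (h : (M.map pairWeight).sum = ∑ x, ∑ y, s (x, y) * pairWeight (x, y)) (p : Fin n × Fin n) :
    M.count p = s p := by
  let digits (t : Fin n × Fin n → ℕ) (ht : ∀ p, t p < 4096) : Fin (n * n) → Fin 4096 :=
    fun i => ⟨t (finProdFinEquiv.symm i), ht _⟩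
  have val_digits (t : Fin n × Fin n → ℕ) (ht : ∀ p, t p < 4096) :
      (finFunctionFinEquiv (digits t ht)).val = ∑ p, t p * pairWeight p := by
    rw [finFunctionFinEquiv_apply_val, ← finProdFinEquiv.sum_comp]
    simp only [digits, Equiv.symm_apply_apply, pairWeight, pow_mul, Nat.reducePow]
  have count_lt (p : Fin n × Fin n) : M.count p < 4096 := (M.count_le_card p).trans_lt hM
  have digits_eq : digits (M.count ·) count_lt = digits s hs := by
    refine finFunctionFinEquiv.injective (Fin.ext ?_)
    refine (val_digits _ count_lt).trans (Eq.trans ?_ (val_digits s hs).symm)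
    rw [Fintype.sum_prod_type fun p => s p * pairWeight p, ← h, Finset.sum_multiset_map_count]
    refine (Finset.sum_subset (Finset.subset_univ _) fun p _ hp => ?_).symm
    rw [Multiset.count_eq_zero.2 (mt Multiset.mem_toFinset.2 hp), zero_mul]
  simpa only [digits, Equiv.symm_apply_apply, Fin.mk.injEq] using
    congrFun digits_eq (finProdFinEquiv p)

lemma Covers.isRealizable {n : ℕ} {G : List (OrderedGame (Fin n))}
    {s : Meeting → Fin n × Fin n → ℕ} (hG : Covers G s) (hs : ∀ κ p, s κ p < 4096) :
    IsRealizable s := by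
  refine ⟨G, fun κ p => ?_⟩
  rw [coverage, Multiset.coe_bind]
  have length_pairs (g : OrderedGame (Fin n)) : (g.pairs κ).length = 2 := by cases κ <;> rfl
  have card_lt :
      Multiset.card (G.flatMap (OrderedGame.pairs κ) : Multiset (Fin n × Fin n)) < 4096 := by
    simpa only [Multiset.coe_card, List.length_flatMap, length_pairs, List.map_const',
      List.sum_replicate, smul_eq_mul, mul_comm] using hG.1
  exact count_eq_of_sum_pairWeight_eq card_lt (hs κ) (hG.2 κ) p

/-- A frame with its games written out; the points of the `i`-th group are those of label `i`. -/
structure FrameDesign where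
  order : ℕ
  groupSizes : List ℕ
  label : Fin order → ℕ
  games : List (OrderedGame (Fin order))

/-- The list of games of a frame design is correct. -/
def FrameDesign.IsValid (D : FrameDesign) : Prop :=
  (∀ x, D.label x < D.groupSizes.length) ∧
    (∀ i : Fin D.groupSizes.length, Finset.card {x | D.label x = i} = D.groupSizes.get i) ∧
    Covers D.games (frameSpec D.label)

instance (D : FrameDesign) : Decidable D.IsValid := inferInstanceAs (Decidable (_ ∧ _ ∧ _))

lemma FrameDesign.IsValid.hasFrameOfType {D : FrameDesign} (hD : D.IsValid) :
    HasFrameOfType D.groupSizes := by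
  obtain ⟨label_lt, card_label, hG⟩ := hD
  let γ (x : Fin D.order) : Fin D.groupSizes.length := ⟨D.label x, label_lt x⟩
  have frameSpec_γ : frameSpec γ = frameSpec D.label := by
    funext κ p
    simp only [frameSpec, γ, Fin.mk.injEq]
  refine hasFrame_of_card_fiber (γ := γ) ?_ fun i => ?_
  · rw [frameSpec_γ]
    refine hG.isRealizable fun κ p => ?_
    unfold frameSpec
    split_ifs <;> norm_num
  · rw [Fintype.card_subtype, ← card_label i]
    simp only [γ, Fin.ext_iff]

/-- A tournament with its games written out. -/
structure TournamentDesign where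
  order : ℕ
  spouses : ℕ
  τ : Fin order → Fin order
  games : List (OrderedGame (Fin order))

/-- The list of games of a tournament design is correct. -/
def TournamentDesign.IsValid (D : TournamentDesign) : Prop :=
  (∀ x, D.τ (D.τ x) = x) ∧ Finset.card {x | D.τ x = x} = D.spouses ∧
    Covers D.games (tournamentSpec D.τ)

instance (D : TournamentDesign) : Decidable D.IsValid := inferInstanceAs (Decidable (_ ∧ _ ∧ _))

lemma TournamentDesign.IsValid.hasTournament {D : TournamentDesign} (hD : D.IsValid) :
    HasTournament D.order D.spouses := by
  obtain ⟨τ_inv, τ_card, hG⟩ := hD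
  refine ⟨D.τ, τ_inv, τ_card, hG.isRealizable fun κ p => ?_⟩
  cases κ <;> simp only [tournamentSpec] <;> split_ifs <;> norm_num

/-- The action of the `j`-th power of the permutation of `ℕ` that moves the points of consecutive
intervals of the given lengths cyclically. -/
def rotate : List ℕ → ℕ → ℕ → ℕ
  | [], _, x => x
  | l :: ls, j, x => if x < l then (x + j) % l else l + rotate ls j (x - l)

/-- The games obtained by rotation from base games, which are listed together with the length of
their orbits. -/
def develop {n : ℕ} [NeZero n] (cycles : List ℕ) (orbits : List (ℕ × List (OrderedGame ℕ))) :
    List (OrderedGame (Fin n)) :=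
  orbits.flatMap fun (length, bases) => (List.range length).flatMap fun j =>
    bases.map (OrderedGame.map fun x => Fin.ofNat n (rotate cycles j x))

/-- Frames found by computer search. -/
def frameDesigns : List FrameDesign :=
  [ ⟨4, List.replicate 4 1, fun x => x,
      develop [3] [(3, [⟨0, 1, 3, 2⟩, ⟨0, 2, 1, 3⟩])]⟩,
    ⟨5, List.replicate 5 1, fun x => x,
      develop [5] [(5, [⟨0, 4, 2, 3⟩, ⟨0, 2, 1, 4⟩])]⟩,
    ⟨13, List.replicate 9 1 ++ [4], fun x => min x 9,
      develop [9] [(9, [⟨0, 9, 3, 1⟩, ⟨0, 10, 2, 3⟩, ⟨0, 11, 4, 6⟩, ⟨0, 12, 1, 5⟩, ⟨0, 8, 12, 7⟩,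
        ⟨0, 3, 11, 8⟩, ⟨0, 5, 10, 2⟩, ⟨0, 6, 9, 4⟩])]⟩,
    ⟨12, List.replicate 10 1 ++ [2], fun x => min x 10,
      develop [10] [(5, [⟨0, 2, 5, 7⟩]), (10, [⟨0, 10, 4, 5⟩, ⟨0, 9, 1, 6⟩, ⟨0, 4, 10, 3⟩,
        ⟨0, 8, 11, 2⟩, ⟨0, 3, 2, 11⟩, ⟨0, 7, 3, 9⟩])]⟩,
    ⟨26, List.replicate 10 1 ++ List.replicate 5 2 ++ [6],
      fun x => if x < 15 then x else if x < 21 then 10 + (x - 15) % 6 else 15,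
      develop [10, 10] [(5, [⟨0, 8, 5, 3⟩]), (10, [⟨0, 9, 15, 20⟩, ⟨0, 20, 16, 18⟩,
        ⟨10, 21, 14, 17⟩, ⟨0, 21, 2, 9⟩, ⟨0, 1, 10, 22⟩, ⟨0, 22, 18, 15⟩, ⟨0, 23, 19, 8⟩,
        ⟨0, 17, 14, 23⟩, ⟨10, 24, 11, 19⟩, ⟨0, 5, 4, 24⟩, ⟨0, 25, 12, 2⟩, ⟨0, 13, 11, 25⟩,
        ⟨0, 3, 17, 5⟩, ⟨0, 19, 3, 7⟩, ⟨0, 18, 1, 11⟩, ⟨0, 11, 13, 6⟩, ⟨0, 16, 24, 12⟩,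
        ⟨0, 14, 23, 13⟩, ⟨0, 15, 20, 4⟩, ⟨0, 2, 22, 19⟩, ⟨0, 6, 25, 14⟩, ⟨0, 12, 21, 10⟩,
        ⟨10, 1, 13, 14⟩, ⟨10, 19, 25, 9⟩, ⟨10, 5, 20, 11⟩, ⟨10, 16, 22, 2⟩, ⟨10, 7, 12, 16⟩,
        ⟨10, 2, 23, 3⟩, ⟨10, 6, 24, 0⟩, ⟨10, 4, 21, 7⟩])]⟩,
    ⟨13, List.replicate 11 1 ++ [2], fun x => min x 11,
      develop [11] [(11, [⟨0, 10, 3, 11⟩, ⟨0, 3, 2, 10⟩, ⟨0, 7, 5, 12⟩, ⟨0, 5, 1, 3⟩,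
        ⟨0, 9, 4, 8⟩, ⟨0, 6, 12, 9⟩, ⟨0, 1, 11, 6⟩])]⟩,
    ⟨15, List.replicate 11 1 ++ [4], fun x => min x 11,
      develop [11] [(11, [⟨0, 11, 5, 3⟩, ⟨0, 2, 3, 12⟩, ⟨0, 8, 2, 13⟩, ⟨0, 14, 4, 9⟩,
        ⟨0, 3, 1, 7⟩, ⟨0, 1, 13, 4⟩, ⟨0, 4, 12, 5⟩, ⟨0, 7, 11, 1⟩, ⟨0, 10, 14, 8⟩])]⟩,
    ⟨12, List.replicate 12 1, fun x => x,
      develop [11] [(11, [⟨0, 1, 2, 7⟩, ⟨0, 11, 3, 1⟩, ⟨0, 6, 4, 8⟩, ⟨0, 8, 11, 5⟩, ⟨0, 3, 5, 4⟩,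
        ⟨0, 7, 1, 3⟩])]⟩,
    ⟨14, List.replicate 12 1 ++ [2], fun x => min x 12,
      develop [12] [(6, [⟨0, 5, 6, 11⟩]), (12, [⟨0, 10, 1, 8⟩, ⟨0, 6, 3, 7⟩, ⟨0, 12, 5, 2⟩,
        ⟨0, 11, 12, 6⟩, ⟨0, 3, 2, 13⟩, ⟨0, 8, 4, 5⟩, ⟨0, 2, 13, 10⟩])]⟩,
    ⟨15, List.replicate 13 1 ++ [2], fun x => min x 13,
      develop [13] [(13, [⟨0, 13, 6, 3⟩, ⟨0, 7, 5, 11⟩, ⟨0, 8, 1, 14⟩, ⟨0, 3, 2, 6⟩, ⟨0, 1, 4, 9⟩,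
        ⟨0, 12, 14, 5⟩, ⟨0, 2, 13, 4⟩, ⟨0, 11, 3, 12⟩])]⟩,
    ⟨16, List.replicate 14 1 ++ [2], fun x => min x 14,
      develop [14] [(7, [⟨0, 12, 7, 5⟩]), (14, [⟨0, 1, 14, 13⟩, ⟨0, 7, 5, 1⟩, ⟨0, 2, 6, 11⟩,
        ⟨0, 8, 4, 7⟩, ⟨0, 13, 15, 3⟩, ⟨0, 14, 2, 6⟩, ⟨0, 15, 3, 9⟩, ⟨0, 9, 1, 12⟩])]⟩,
    ⟨18, List.replicate 14 1 ++ [4], fun x => min x 14,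
      develop [14] [(7, [⟨0, 8, 7, 1⟩]), (14, [⟨0, 7, 1, 14⟩, ⟨0, 1, 5, 15⟩, ⟨0, 6, 3, 7⟩,
        ⟨0, 16, 4, 13⟩, ⟨0, 10, 2, 5⟩, ⟨0, 17, 6, 11⟩, ⟨0, 11, 15, 9⟩, ⟨0, 2, 14, 12⟩,
        ⟨0, 12, 16, 4⟩, ⟨0, 13, 17, 2⟩])]⟩,
    ⟨14, List.replicate 14 1, fun x => x,
      develop [13] [(13, [⟨0, 1, 2, 5⟩, ⟨0, 13, 6, 1⟩, ⟨0, 10, 3, 9⟩, ⟨0, 7, 4, 2⟩, ⟨0, 2, 5, 4⟩,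
        ⟨0, 4, 13, 11⟩, ⟨0, 9, 1, 6⟩])]⟩,
    ⟨17, List.replicate 15 1 ++ [2], fun x => min x 15,
      develop [15] [(15, [⟨0, 6, 5, 15⟩, ⟨0, 12, 3, 4⟩, ⟨0, 5, 2, 16⟩, ⟨0, 13, 6, 8⟩,
        ⟨0, 10, 4, 12⟩, ⟨0, 9, 7, 10⟩, ⟨0, 14, 1, 5⟩, ⟨0, 7, 16, 11⟩, ⟨0, 11, 15, 14⟩])]⟩,
    ⟨19, List.replicate 15 1 ++ [4], fun x => min x 15,
      develop [15] [(15, [⟨0, 15, 5, 2⟩, ⟨0, 16, 1, 5⟩, ⟨0, 17, 7, 3⟩, ⟨0, 18, 2, 7⟩,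
        ⟨0, 2, 4, 11⟩, ⟨0, 9, 3, 4⟩, ⟨0, 14, 6, 1⟩, ⟨0, 3, 17, 10⟩, ⟨0, 6, 18, 9⟩, ⟨0, 8, 15, 12⟩,
        ⟨0, 13, 16, 14⟩])]⟩,
    ⟨21, List.replicate 15 1 ++ [6], fun x => min x 15,
      develop [15] [(15, [⟨0, 15, 3, 14⟩, ⟨0, 16, 5, 2⟩, ⟨0, 17, 1, 7⟩, ⟨0, 18, 7, 11⟩,
        ⟨0, 1, 4, 19⟩, ⟨0, 20, 6, 5⟩, ⟨0, 3, 2, 9⟩, ⟨0, 10, 20, 6⟩, ⟨0, 5, 16, 13⟩,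
        ⟨0, 13, 17, 10⟩, ⟨0, 8, 18, 3⟩, ⟨0, 2, 19, 4⟩, ⟨0, 9, 15, 8⟩])]⟩,
    ⟨24, List.replicate 17 1 ++ [7], fun x => min x 17,
      develop [17] [(17, [⟨0, 17, 1, 6⟩, ⟨0, 15, 2, 18⟩, ⟨0, 12, 7, 19⟩, ⟨0, 7, 3, 20⟩,
        ⟨0, 21, 8, 11⟩, ⟨0, 22, 5, 16⟩, ⟨0, 14, 6, 23⟩, ⟨0, 2, 4, 12⟩, ⟨0, 13, 18, 1⟩,
        ⟨0, 9, 23, 3⟩, ⟨0, 4, 21, 7⟩, ⟨0, 16, 17, 14⟩, ⟨0, 6, 22, 2⟩, ⟨0, 10, 19, 9⟩,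
        ⟨0, 1, 20, 10⟩])]⟩,
    ⟨20, List.replicate 18 1 ++ [2], fun x => min x 18,
      develop [18] [(9, [⟨0, 11, 9, 2⟩]), (18, [⟨0, 16, 5, 6⟩, ⟨0, 19, 7, 15⟩, ⟨0, 14, 4, 7⟩,
        ⟨0, 15, 1, 13⟩, ⟨0, 10, 19, 16⟩, ⟨0, 17, 8, 12⟩, ⟨0, 5, 6, 1⟩, ⟨0, 9, 18, 8⟩,
        ⟨0, 6, 3, 18⟩, ⟨0, 7, 2, 4⟩])]⟩,
    ⟨22, List.replicate 18 1 ++ [4], fun x => min x 18,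
      develop [18] [(9, [⟨0, 6, 9, 15⟩]), (18, [⟨0, 10, 3, 18⟩, ⟨0, 19, 4, 5⟩, ⟨0, 16, 2, 13⟩,
        ⟨0, 12, 8, 10⟩, ⟨0, 7, 19, 17⟩, ⟨0, 13, 18, 6⟩, ⟨0, 8, 7, 12⟩, ⟨0, 17, 20, 11⟩,
        ⟨0, 9, 21, 8⟩, ⟨0, 15, 6, 2⟩, ⟨0, 3, 5, 21⟩, ⟨0, 4, 1, 20⟩])]⟩,
    ⟨26, List.replicate 18 1 ++ List.replicate 4 2,
      fun x => if x < 21 then x else if x < 25 then x - 3 else 21,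
      develop [6, 6, 6, 6] [(3, [⟨0, 1, 3, 4⟩, ⟨6, 11, 9, 8⟩, ⟨12, 17, 15, 14⟩]), (6,
        [⟨18, 25, 19, 23⟩, ⟨0, 25, 8, 14⟩, ⟨0, 3, 6, 25⟩, ⟨12, 25, 13, 9⟩, ⟨0, 13, 2, 1⟩,
        ⟨0, 15, 10, 8⟩, ⟨0, 18, 7, 15⟩, ⟨0, 10, 11, 12⟩, ⟨0, 11, 1, 24⟩, ⟨0, 21, 25, 16⟩,
        ⟨0, 14, 20, 22⟩, ⟨0, 12, 23, 2⟩, ⟨0, 16, 17, 23⟩, ⟨0, 17, 24, 21⟩, ⟨0, 6, 14, 19⟩,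
        ⟨0, 4, 19, 18⟩, ⟨0, 9, 16, 20⟩, ⟨0, 19, 9, 13⟩, ⟨0, 2, 15, 9⟩, ⟨0, 22, 18, 7⟩,
        ⟨0, 20, 13, 6⟩, ⟨0, 23, 21, 11⟩, ⟨0, 7, 12, 5⟩, ⟨0, 8, 22, 3⟩, ⟨6, 18, 12, 20⟩,
        ⟨6, 23, 8, 18⟩, ⟨12, 1, 25, 23⟩, ⟨12, 10, 19, 20⟩, ⟨6, 21, 17, 24⟩, ⟨6, 20, 7, 5⟩,
        ⟨12, 21, 20, 3⟩, ⟨6, 19, 24, 2⟩, ⟨12, 2, 14, 21⟩, ⟨12, 9, 21, 13⟩, ⟨12, 7, 24, 16⟩,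
        ⟨18, 4, 24, 8⟩, ⟨12, 0, 18, 6⟩, ⟨12, 4, 23, 24⟩, ⟨6, 9, 13, 14⟩, ⟨6, 8, 21, 7⟩,
        ⟨6, 1, 23, 10⟩, ⟨6, 7, 25, 9⟩, ⟨18, 9, 20, 15⟩, ⟨12, 14, 22, 15⟩, ⟨6, 3, 14, 12⟩,
        ⟨6, 5, 15, 0⟩, ⟨6, 0, 20, 4⟩, ⟨6, 17, 18, 15⟩, ⟨6, 15, 19, 1⟩, ⟨6, 2, 16, 13⟩,
        ⟨6, 24, 22, 16⟩, ⟨18, 14, 25, 1⟩])]⟩,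
    ⟨26, List.replicate 19 1 ++ [7], fun x => min x 19,
      develop [19] [(19, [⟨0, 15, 9, 19⟩, ⟨0, 6, 7, 20⟩, ⟨0, 1, 3, 21⟩, ⟨0, 17, 8, 22⟩,
        ⟨0, 8, 4, 23⟩, ⟨0, 13, 5, 24⟩, ⟨0, 25, 2, 11⟩, ⟨0, 3, 1, 13⟩, ⟨0, 11, 6, 16⟩,
        ⟨0, 5, 20, 7⟩, ⟨0, 7, 23, 14⟩, ⟨0, 18, 25, 15⟩, ⟨0, 4, 22, 12⟩, ⟨0, 2, 24, 1⟩,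
        ⟨0, 14, 19, 10⟩, ⟨0, 16, 21, 3⟩])]⟩,
    ⟨27, List.replicate 20 1 ++ [7], fun x => min x 20,
      develop [20] [(10, [⟨0, 18, 10, 8⟩]), (20, [⟨0, 20, 7, 16⟩, ⟨0, 3, 9, 21⟩, ⟨0, 22, 2, 12⟩,
        ⟨0, 23, 4, 5⟩, ⟨0, 7, 8, 24⟩, ⟨0, 25, 6, 17⟩, ⟨0, 12, 5, 26⟩, ⟨0, 4, 1, 9⟩, ⟨0, 13, 3, 2⟩,
        ⟨0, 6, 24, 4⟩, ⟨0, 16, 22, 15⟩, ⟨0, 2, 20, 6⟩, ⟨0, 17, 25, 11⟩, ⟨0, 14, 26, 1⟩,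
        ⟨0, 5, 23, 13⟩, ⟨0, 15, 21, 18⟩])]⟩,
    ⟨31, List.replicate 24 1 ++ [7], fun x => min x 24,
      develop [24] [(12, [⟨0, 23, 12, 11⟩]), (24, [⟨0, 24, 9, 18⟩, ⟨0, 5, 1, 25⟩, ⟨0, 26, 6, 10⟩,
        ⟨0, 27, 4, 15⟩, ⟨0, 28, 10, 3⟩, ⟨0, 12, 3, 30⟩, ⟨0, 20, 8, 23⟩, ⟨0, 16, 2, 29⟩,
        ⟨0, 8, 7, 13⟩, ⟨0, 7, 11, 6⟩, ⟨0, 22, 5, 2⟩, ⟨0, 13, 28, 22⟩, ⟨0, 3, 30, 19⟩,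
        ⟨0, 18, 29, 5⟩, ⟨0, 14, 25, 21⟩, ⟨0, 1, 24, 7⟩, ⟨0, 2, 26, 16⟩, ⟨0, 10, 27, 8⟩])]⟩,
    ⟨34, List.replicate 27 1 ++ [7], fun x => min x 27,
      develop [27] [(27, [⟨0, 23, 2, 27⟩, ⟨0, 28, 11, 19⟩, ⟨0, 16, 6, 29⟩, ⟨0, 30, 4, 23⟩,
        ⟨0, 26, 9, 31⟩, ⟨0, 20, 12, 32⟩, ⟨0, 33, 5, 3⟩, ⟨0, 22, 13, 26⟩, ⟨0, 5, 7, 18⟩,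
        ⟨0, 10, 3, 4⟩, ⟨0, 21, 8, 12⟩, ⟨0, 12, 1, 15⟩, ⟨0, 24, 10, 16⟩, ⟨0, 2, 28, 22⟩,
        ⟨0, 9, 27, 24⟩, ⟨0, 15, 31, 20⟩, ⟨0, 18, 30, 1⟩, ⟨0, 17, 33, 6⟩, ⟨0, 7, 29, 5⟩,
        ⟨0, 3, 32, 2⟩])]⟩,
    ⟨30, List.replicate 30 1, fun x => x,
      develop [29] [(29, [⟨0, 20, 14, 15⟩, ⟨0, 7, 13, 17⟩, ⟨0, 26, 1, 11⟩, ⟨0, 21, 2, 1⟩,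
        ⟨0, 14, 11, 29⟩, ⟨0, 17, 8, 21⟩, ⟨0, 24, 6, 2⟩, ⟨0, 27, 3, 26⟩, ⟨0, 3, 10, 16⟩,
        ⟨0, 15, 7, 12⟩, ⟨0, 12, 5, 14⟩, ⟨0, 19, 9, 27⟩, ⟨0, 2, 29, 13⟩, ⟨0, 8, 4, 20⟩,
        ⟨0, 11, 12, 5⟩])]⟩,
    ⟨38, List.replicate 30 1 ++ [8], fun x => min x 30,
      develop [30] [(15, [⟨0, 9, 15, 24⟩]), (30, [⟨0, 30, 13, 23⟩, ⟨0, 31, 3, 9⟩, ⟨0, 20, 5, 32⟩,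
        ⟨0, 22, 8, 33⟩, ⟨0, 1, 11, 34⟩, ⟨0, 35, 4, 12⟩, ⟨0, 36, 10, 26⟩, ⟨0, 19, 9, 37⟩,
        ⟨0, 28, 12, 25⟩, ⟨0, 21, 2, 27⟩, ⟨0, 24, 7, 4⟩, ⟨0, 2, 14, 13⟩, ⟨0, 12, 1, 5⟩,
        ⟨0, 14, 6, 2⟩, ⟨0, 18, 34, 1⟩, ⟨0, 17, 35, 22⟩, ⟨0, 7, 33, 28⟩, ⟨0, 5, 36, 6⟩,
        ⟨0, 11, 31, 3⟩, ⟨0, 15, 30, 29⟩, ⟨0, 3, 37, 7⟩, ⟨0, 23, 32, 21⟩])]⟩,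
    ⟨42, List.replicate 33 1 ++ [9], fun x => min x 33,
      develop [33] [(33, [⟨0, 33, 15, 29⟩, ⟨0, 34, 5, 28⟩, ⟨0, 35, 2, 7⟩, ⟨0, 36, 14, 15⟩,
        ⟨0, 27, 8, 37⟩, ⟨0, 38, 16, 8⟩, ⟨0, 39, 12, 3⟩, ⟨0, 40, 9, 26⟩, ⟨0, 7, 13, 31⟩,
        ⟨0, 15, 1, 9⟩, ⟨0, 16, 3, 1⟩, ⟨0, 30, 6, 5⟩, ⟨0, 28, 7, 11⟩, ⟨0, 41, 11, 22⟩,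
        ⟨0, 2, 10, 23⟩, ⟨0, 6, 4, 16⟩, ⟨0, 22, 35, 17⟩, ⟨0, 20, 38, 18⟩, ⟨0, 26, 40, 4⟩,
        ⟨0, 21, 39, 20⟩, ⟨0, 10, 41, 30⟩, ⟨0, 19, 34, 12⟩, ⟨0, 9, 36, 6⟩, ⟨0, 3, 37, 32⟩,
        ⟨0, 29, 33, 10⟩])]⟩,
    ⟨8, List.replicate 4 2, fun x => if x < 6 then x % 3 else 3,
      develop [3, 3] [(3, [⟨0, 1, 7, 2⟩, ⟨3, 4, 7, 5⟩, ⟨0, 6, 1, 5⟩, ⟨0, 2, 6, 4⟩, ⟨0, 5, 4, 7⟩,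
        ⟨0, 7, 5, 1⟩, ⟨3, 6, 4, 2⟩, ⟨3, 5, 6, 1⟩])]⟩,
    ⟨10, List.replicate 5 2, fun x => x % 5,
      develop [10] [(10, [⟨0, 2, 3, 4⟩, ⟨0, 8, 2, 1⟩, ⟨0, 3, 1, 7⟩, ⟨0, 7, 4, 8⟩])]⟩,
    ⟨12, List.replicate 6 2, fun x => x % 6,
      develop [12] [(12, [⟨0, 9, 1, 4⟩, ⟨0, 5, 3, 1⟩, ⟨0, 4, 5, 7⟩, ⟨0, 7, 4, 5⟩,
        ⟨0, 11, 2, 10⟩])]⟩,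
    ⟨26, List.replicate 9 2 ++ [8], fun x => if x < 18 then x % 9 else 9,
      develop [18] [(18, [⟨0, 15, 3, 18⟩, ⟨0, 19, 2, 6⟩, ⟨0, 11, 8, 20⟩, ⟨0, 8, 1, 21⟩,
        ⟨0, 22, 6, 5⟩, ⟨0, 3, 5, 23⟩, ⟨0, 12, 4, 24⟩, ⟨0, 2, 7, 25⟩, ⟨0, 6, 25, 17⟩,
        ⟨0, 13, 24, 11⟩, ⟨0, 10, 18, 14⟩, ⟨0, 1, 23, 2⟩, ⟨0, 5, 20, 15⟩, ⟨0, 14, 21, 1⟩,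
        ⟨0, 7, 22, 10⟩, ⟨0, 16, 19, 4⟩])]⟩,
    ⟨28, List.replicate 10 2 ++ [8], fun x => if x < 20 then x % 10 else 10,
      develop [20] [(20, [⟨0, 20, 4, 18⟩, ⟨0, 21, 1, 12⟩, ⟨0, 22, 8, 13⟩, ⟨0, 23, 5, 7⟩,
        ⟨0, 24, 2, 15⟩, ⟨0, 25, 7, 8⟩, ⟨0, 17, 6, 26⟩, ⟨0, 18, 9, 27⟩, ⟨0, 4, 3, 19⟩,
        ⟨0, 8, 24, 16⟩, ⟨0, 9, 27, 2⟩, ⟨0, 19, 21, 3⟩, ⟨0, 12, 20, 6⟩, ⟨0, 7, 23, 4⟩,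
        ⟨0, 3, 22, 5⟩, ⟨0, 6, 25, 17⟩, ⟨0, 15, 26, 14⟩])]⟩,
    ⟨30, List.replicate 11 2 ++ [8], fun x => if x < 22 then x % 11 else 11,
      develop [22] [(22, [⟨0, 5, 8, 22⟩, ⟨0, 23, 10, 9⟩, ⟨0, 24, 2, 8⟩, ⟨0, 25, 6, 7⟩,
        ⟨0, 20, 4, 26⟩, ⟨0, 27, 7, 21⟩, ⟨0, 28, 5, 1⟩, ⟨0, 29, 3, 10⟩, ⟨0, 15, 9, 3⟩,
        ⟨0, 3, 1, 5⟩, ⟨0, 2, 24, 18⟩, ⟨0, 12, 25, 4⟩, ⟨0, 8, 29, 17⟩, ⟨0, 10, 28, 15⟩,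
        ⟨0, 9, 27, 13⟩, ⟨0, 17, 26, 20⟩, ⟨0, 19, 23, 12⟩, ⟨0, 13, 22, 14⟩])]⟩,
    ⟨16, List.replicate 5 3 ++ [1], fun x => if x < 15 then x % 5 else 5,
      develop [5, 5, 5] [(5, [⟨0, 9, 1, 12⟩, ⟨0, 15, 2, 9⟩, ⟨0, 6, 13, 7⟩, ⟨0, 4, 8, 1⟩,
        ⟨0, 1, 14, 13⟩, ⟨0, 14, 12, 3⟩, ⟨0, 2, 9, 11⟩, ⟨0, 8, 7, 6⟩, ⟨0, 13, 6, 14⟩,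
        ⟨0, 3, 15, 2⟩, ⟨0, 12, 11, 4⟩, ⟨7, 15, 11, 13⟩, ⟨14, 3, 10, 6⟩, ⟨7, 1, 10, 15⟩,
        ⟨7, 8, 9, 1⟩, ⟨7, 5, 8, 4⟩, ⟨14, 7, 11, 3⟩, ⟨14, 12, 15, 8⟩, ⟨7, 11, 13, 5⟩,
        ⟨7, 9, 15, 11⟩, ⟨7, 13, 14, 10⟩])]⟩,
    ⟨20, List.replicate 5 3 ++ [5], fun x => if x < 15 then x % 5 else 5,
      develop [15] [(15, [⟨0, 15, 1, 13⟩, ⟨0, 16, 2, 9⟩, ⟨0, 17, 3, 6⟩, ⟨0, 1, 4, 19⟩,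
        ⟨0, 6, 7, 3⟩, ⟨0, 2, 6, 18⟩, ⟨0, 4, 15, 8⟩, ⟨0, 13, 18, 4⟩, ⟨0, 9, 16, 2⟩, ⟨0, 8, 19, 7⟩,
        ⟨0, 14, 17, 1⟩])]⟩,
    ⟨18, List.replicate 6 3, fun x => if x < 9 then x % 3 else 3 + (x - 9) % 3,
      develop [9, 9] [(9, [⟨0, 5, 1, 16⟩, ⟨0, 1, 2, 13⟩, ⟨0, 14, 4, 12⟩, ⟨0, 13, 15, 17⟩,
        ⟨0, 10, 14, 9⟩, ⟨0, 16, 12, 7⟩, ⟨0, 4, 10, 11⟩, ⟨0, 12, 13, 2⟩, ⟨0, 8, 9, 14⟩,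
        ⟨9, 6, 13, 11⟩, ⟨0, 9, 17, 1⟩, ⟨0, 2, 16, 15⟩, ⟨0, 7, 11, 5⟩, ⟨9, 0, 11, 1⟩,
        ⟨9, 1, 10, 6⟩])]⟩,
    ⟨19, List.replicate 6 3 ++ [1], fun x => if x < 18 then x % 6 else 6,
      develop [18] [(9, [⟨0, 7, 9, 16⟩]), (18, [⟨0, 5, 3, 7⟩, ⟨0, 1, 5, 4⟩, ⟨0, 18, 4, 17⟩,
        ⟨0, 16, 8, 5⟩, ⟨0, 3, 2, 11⟩, ⟨0, 11, 1, 15⟩, ⟨0, 8, 18, 13⟩, ⟨0, 10, 7, 9⟩])]⟩,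
    ⟨22, List.replicate 6 3 ++ [4], fun x => if x < 18 then x % 6 else 6,
      develop [18] [(9, [⟨0, 16, 9, 7⟩]), (18, [⟨0, 18, 3, 5⟩, ⟨0, 14, 19, 13⟩, ⟨0, 9, 8, 11⟩,
        ⟨0, 13, 18, 17⟩, ⟨0, 4, 7, 21⟩, ⟨0, 20, 4, 9⟩, ⟨0, 10, 2, 19⟩, ⟨0, 15, 1, 2⟩,
        ⟨0, 8, 5, 16⟩, ⟨0, 17, 20, 10⟩, ⟨0, 7, 21, 4⟩])]⟩,
    ⟨24, List.replicate 6 3 ++ [6], fun x => if x < 18 then x % 6 else 6,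
      develop [18] [(9, [⟨0, 11, 9, 2⟩]), (18, [⟨0, 3, 8, 18⟩, ⟨0, 19, 4, 14⟩, ⟨0, 20, 3, 8⟩,
        ⟨0, 21, 5, 7⟩, ⟨0, 4, 1, 22⟩, ⟨0, 8, 7, 4⟩, ⟨0, 23, 2, 11⟩, ⟨0, 14, 22, 9⟩,
        ⟨0, 1, 18, 17⟩, ⟨0, 7, 20, 15⟩, ⟨0, 16, 19, 5⟩, ⟨0, 17, 21, 16⟩, ⟨0, 13, 23, 10⟩])]⟩,
    ⟨21, List.replicate 7 3, fun x => x % 7,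
      develop [21] [(21, [⟨0, 1, 9, 18⟩, ⟨0, 5, 1, 3⟩, ⟨0, 16, 6, 17⟩, ⟨0, 13, 2, 1⟩,
        ⟨0, 10, 8, 5⟩, ⟨0, 8, 10, 16⟩, ⟨0, 12, 3, 6⟩, ⟨0, 19, 4, 8⟩, ⟨0, 17, 5, 20⟩])]⟩,
    ⟨22, List.replicate 4 4 ++ [6], fun x => if x < 16 then x % 4 else 4,
      develop [16] [(16, [⟨0, 15, 2, 16⟩, ⟨0, 7, 1, 17⟩, ⟨0, 18, 6, 15⟩, ⟨0, 19, 5, 11⟩,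
        ⟨0, 1, 3, 20⟩, ⟨0, 21, 7, 2⟩, ⟨0, 5, 18, 3⟩, ⟨0, 3, 17, 9⟩, ⟨0, 13, 20, 10⟩,
        ⟨0, 2, 21, 1⟩, ⟨0, 10, 16, 5⟩, ⟨0, 14, 19, 7⟩])]⟩,
    ⟨14, 4 :: List.replicate 5 2, fun x => if x < 10 then x % 5 + 1 else 0,
      develop [10] [(10, [⟨0, 10, 1, 3⟩, ⟨0, 1, 4, 11⟩, ⟨0, 12, 2, 9⟩, ⟨0, 9, 3, 13⟩,
        ⟨0, 6, 10, 8⟩, ⟨0, 4, 13, 1⟩, ⟨0, 3, 11, 4⟩, ⟨0, 8, 12, 2⟩])]⟩,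
    ⟨26, List.replicate 4 6 ++ [2], fun x => if x < 24 then x % 4 else 4,
      develop [24] [(24, [⟨0, 13, 2, 19⟩, ⟨0, 25, 10, 15⟩, ⟨0, 15, 6, 1⟩, ⟨0, 3, 25, 5⟩,
        ⟨0, 10, 3, 21⟩, ⟨0, 6, 24, 3⟩, ⟨0, 2, 9, 24⟩, ⟨0, 14, 1, 23⟩, ⟨0, 21, 11, 22⟩,
        ⟨0, 23, 5, 6⟩, ⟨0, 9, 7, 14⟩])]⟩ ]

/-- Tournaments found by computer search. -/
def tournamentDesigns : List TournamentDesign :=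
  [ ⟨0, 0, ![], []⟩,
    ⟨1, 1, ![0], []⟩,
    ⟨2, 0, ![1, 0],
      develop [2] [(1, [⟨0, 0, 1, 1⟩, ⟨0, 1, 1, 0⟩])]⟩,
    ⟨3, 1, ![1, 0, 2],
      develop [2] [(2, [⟨0, 1, 1, 2⟩, ⟨0, 0, 2, 1⟩])]⟩,
    ⟨4, 0, ![2, 3, 0, 1],
      develop [4] [(4, [⟨0, 1, 1, 3⟩, ⟨0, 0, 2, 1⟩])]⟩,
    ⟨5, 1, ![2, 3, 0, 1, 4],
      develop [4] [(2, [⟨0, 1, 2, 3⟩, ⟨0, 2, 2, 0⟩]), (4, [⟨0, 0, 4, 1⟩, ⟨0, 3, 1, 4⟩])]⟩,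
    ⟨6, 0, ![3, 4, 5, 0, 1, 2],
      develop [6] [(3, [⟨0, 2, 3, 5⟩, ⟨0, 3, 3, 0⟩]), (6, [⟨0, 5, 1, 1⟩, ⟨0, 4, 2, 3⟩])]⟩,
    ⟨6, 4, ![0, 1, 2, 3, 5, 4],
      develop [] [(1, [⟨0, 2, 1, 4⟩, ⟨0, 5, 3, 1⟩, ⟨3, 2, 5, 1⟩, ⟨0, 3, 4, 2⟩, ⟨0, 1, 2, 3⟩,
        ⟨0, 4, 5, 5⟩, ⟨4, 1, 5, 0⟩, ⟨2, 1, 4, 4⟩, ⟨1, 2, 3, 0⟩, ⟨3, 4, 4, 0⟩, ⟨2, 0, 5, 3⟩,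
        ⟨1, 0, 2, 5⟩, ⟨1, 3, 5, 4⟩, ⟨1, 5, 4, 3⟩, ⟨2, 4, 3, 5⟩, ⟨4, 5, 5, 2⟩])]⟩,
    ⟨7, 1, ![3, 4, 5, 0, 1, 2, 6],
      develop [6] [(6, [⟨0, 3, 3, 2⟩, ⟨0, 1, 6, 3⟩, ⟨0, 2, 1, 5⟩, ⟨0, 0, 2, 6⟩])]⟩,
    ⟨7, 3, ![0, 1, 3, 2, 5, 4, 6],
      develop [2, 2, 2] [(1, [⟨0, 4, 1, 5⟩, ⟨4, 1, 5, 0⟩, ⟨4, 5, 5, 4⟩]), (2, [⟨0, 3, 5, 6⟩,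
        ⟨0, 6, 3, 1⟩, ⟨2, 6, 4, 4⟩, ⟨0, 2, 2, 3⟩, ⟨0, 1, 6, 4⟩, ⟨0, 5, 4, 2⟩, ⟨2, 2, 5, 1⟩,
        ⟨2, 1, 3, 5⟩, ⟨2, 5, 6, 3⟩, ⟨4, 3, 6, 1⟩])]⟩,
    ⟨7, 5, ![0, 1, 2, 3, 4, 6, 5],
      develop [5] [(1, [⟨5, 5, 6, 6⟩, ⟨5, 6, 6, 5⟩]), (5, [⟨0, 2, 1, 5⟩, ⟨0, 4, 2, 6⟩,
        ⟨0, 3, 5, 4⟩, ⟨0, 1, 6, 3⟩])]⟩,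
    ⟨7, 7, ![0, 1, 2, 3, 4, 5, 6],
      develop [7] [(7, [⟨0, 6, 3, 4⟩, ⟨0, 4, 2, 5⟩, ⟨0, 2, 1, 6⟩])]⟩,
    ⟨8, 2, ![0, 1, 3, 2, 5, 4, 7, 6],
      develop [] [(1, [⟨0, 2, 1, 7⟩, ⟨0, 1, 5, 4⟩, ⟨0, 3, 6, 6⟩, ⟨0, 4, 4, 3⟩, ⟨0, 5, 2, 1⟩,
        ⟨0, 7, 3, 5⟩, ⟨0, 6, 7, 2⟩, ⟨3, 1, 6, 0⟩, ⟨6, 1, 7, 7⟩, ⟨4, 2, 5, 1⟩, ⟨2, 3, 7, 1⟩,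
        ⟨3, 6, 4, 1⟩, ⟨3, 2, 7, 3⟩, ⟨2, 4, 3, 7⟩, ⟨6, 5, 7, 4⟩, ⟨5, 7, 7, 0⟩, ⟨1, 3, 4, 7⟩,
        ⟨2, 7, 4, 6⟩, ⟨5, 6, 6, 7⟩, ⟨1, 6, 5, 5⟩, ⟨2, 5, 5, 3⟩, ⟨4, 5, 6, 2⟩, ⟨4, 0, 7, 5⟩,
        ⟨1, 5, 3, 4⟩, ⟨3, 3, 5, 2⟩, ⟨1, 2, 2, 0⟩, ⟨1, 0, 6, 3⟩, ⟨1, 4, 7, 6⟩, ⟨2, 2, 6, 4⟩,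
        ⟨2, 6, 3, 0⟩, ⟨4, 4, 5, 0⟩])]⟩,
    ⟨8, 4, ![0, 1, 2, 3, 5, 4, 7, 6],
      develop [2, 2, 2, 2] [(1, [⟨0, 3, 1, 2⟩, ⟨2, 1, 3, 0⟩]), (2, [⟨0, 6, 2, 4⟩, ⟨0, 5, 3, 6⟩,
        ⟨0, 7, 7, 1⟩, ⟨0, 2, 4, 7⟩, ⟨0, 1, 5, 3⟩, ⟨0, 4, 6, 5⟩, ⟨4, 0, 5, 5⟩, ⟨4, 3, 6, 4⟩,
        ⟨2, 3, 4, 5⟩, ⟨2, 5, 6, 1⟩, ⟨4, 1, 7, 6⟩, ⟨2, 0, 7, 3⟩, ⟨2, 6, 5, 7⟩, ⟨6, 3, 7, 7⟩])]⟩,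
    ⟨8, 6, ![0, 1, 2, 3, 4, 5, 7, 6],
      develop [] [(1, [⟨0, 2, 1, 3⟩, ⟨0, 3, 4, 7⟩, ⟨0, 4, 5, 6⟩, ⟨0, 1, 2, 5⟩, ⟨0, 5, 6, 4⟩,
        ⟨0, 6, 7, 1⟩, ⟨0, 7, 3, 2⟩, ⟨3, 1, 7, 4⟩, ⟨3, 4, 6, 2⟩, ⟨1, 0, 2, 4⟩, ⟨1, 4, 7, 7⟩,
        ⟨2, 3, 5, 4⟩, ⟨6, 5, 7, 3⟩, ⟨2, 1, 4, 3⟩, ⟨1, 6, 5, 3⟩, ⟨6, 3, 7, 0⟩, ⟨5, 0, 7, 2⟩,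
        ⟨5, 2, 6, 1⟩, ⟨4, 0, 5, 7⟩, ⟨1, 7, 6, 6⟩, ⟨1, 2, 4, 5⟩, ⟨1, 5, 3, 0⟩, ⟨2, 0, 3, 6⟩,
        ⟨2, 6, 6, 7⟩, ⟨2, 7, 7, 5⟩, ⟨3, 5, 4, 6⟩, ⟨3, 7, 5, 1⟩, ⟨4, 1, 6, 0⟩, ⟨4, 2, 7, 6⟩])]⟩,
    ⟨8, 8, ![0, 1, 2, 3, 4, 5, 6, 7],
      develop [7] [(7, [⟨0, 1, 3, 6⟩, ⟨0, 4, 2, 1⟩, ⟨0, 2, 7, 3⟩, ⟨0, 5, 1, 7⟩])]⟩,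
    ⟨9, 3, ![0, 1, 2, 6, 7, 8, 3, 4, 5],
      develop [3, 3, 3] [(3, [⟨0, 7, 1, 3⟩, ⟨0, 4, 6, 2⟩, ⟨0, 3, 3, 4⟩, ⟨0, 2, 7, 1⟩,
        ⟨0, 8, 5, 5⟩, ⟨0, 1, 4, 8⟩, ⟨0, 6, 8, 7⟩, ⟨3, 8, 4, 2⟩, ⟨3, 2, 8, 5⟩, ⟨3, 0, 7, 8⟩,
        ⟨3, 5, 6, 1⟩, ⟨3, 6, 6, 4⟩, ⟨6, 6, 7, 3⟩])]⟩,
    ⟨9, 5, ![0, 1, 2, 3, 6, 7, 4, 5, 8],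
      develop [4, 4] [(2, [⟨0, 4, 2, 6⟩, ⟨4, 0, 6, 2⟩, ⟨4, 7, 6, 5⟩]), (4, [⟨0, 8, 1, 4⟩,
        ⟨4, 8, 5, 0⟩, ⟨0, 5, 5, 3⟩, ⟨0, 3, 6, 7⟩, ⟨0, 1, 8, 2⟩, ⟨0, 2, 7, 5⟩, ⟨0, 6, 4, 1⟩,
        ⟨4, 4, 8, 7⟩])]⟩,
    ⟨9, 7, ![0, 1, 2, 3, 4, 5, 6, 8, 7],
      develop [7] [(1, [⟨7, 7, 8, 8⟩, ⟨7, 8, 8, 7⟩]), (7, [⟨0, 2, 3, 7⟩, ⟨0, 5, 8, 3⟩,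
        ⟨0, 4, 7, 1⟩, ⟨0, 8, 1, 2⟩, ⟨0, 6, 2, 5⟩])]⟩,
    ⟨9, 9, ![0, 1, 2, 3, 4, 5, 6, 7, 8],
      develop [8] [(4, [⟨0, 2, 4, 6⟩]), (8, [⟨0, 3, 2, 8⟩, ⟨0, 7, 8, 5⟩, ⟨0, 5, 3, 4⟩,
        ⟨0, 4, 1, 7⟩])]⟩,
    ⟨10, 2, ![0, 1, 3, 2, 5, 4, 7, 6, 9, 8],
      develop [2, 2, 2, 2] [(1, [⟨8, 8, 9, 9⟩, ⟨8, 9, 9, 8⟩, ⟨0, 4, 1, 5⟩, ⟨4, 1, 5, 0⟩,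
        ⟨4, 7, 5, 6⟩, ⟨6, 5, 7, 4⟩, ⟨6, 7, 7, 6⟩]), (2, [⟨0, 1, 7, 8⟩, ⟨2, 8, 5, 7⟩, ⟨0, 8, 3, 4⟩,
        ⟨4, 8, 7, 2⟩, ⟨4, 0, 9, 5⟩, ⟨4, 4, 8, 3⟩, ⟨4, 5, 6, 1⟩, ⟨6, 0, 8, 7⟩, ⟨0, 3, 8, 1⟩,
        ⟨2, 6, 9, 0⟩, ⟨2, 1, 6, 9⟩, ⟨2, 0, 3, 3⟩, ⟨2, 4, 4, 2⟩, ⟨0, 6, 2, 3⟩, ⟨0, 7, 4, 9⟩,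
        ⟨2, 9, 7, 5⟩, ⟨0, 9, 5, 2⟩, ⟨2, 7, 8, 4⟩, ⟨0, 5, 9, 7⟩, ⟨0, 2, 6, 6⟩, ⟨6, 2, 9, 3⟩])]⟩,
    ⟨10, 4, ![0, 1, 2, 3, 6, 7, 4, 5, 9, 8],
      develop [4, 4] [(1, [⟨8, 8, 9, 9⟩, ⟨8, 9, 9, 8⟩]), (2, [⟨0, 6, 2, 4⟩, ⟨4, 0, 6, 2⟩,
        ⟨4, 7, 6, 5⟩]), (4, [⟨0, 9, 1, 6⟩, ⟨4, 9, 5, 0⟩, ⟨0, 4, 6, 3⟩, ⟨0, 8, 5, 7⟩, ⟨4, 4, 8, 7⟩,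
        ⟨0, 2, 9, 5⟩, ⟨0, 7, 7, 1⟩, ⟨4, 5, 9, 1⟩, ⟨0, 1, 8, 2⟩, ⟨0, 3, 4, 8⟩])]⟩,
    ⟨10, 6, ![0, 1, 2, 3, 4, 5, 7, 6, 9, 8],
      develop [2, 2, 2, 2] [(1, [⟨8, 8, 9, 9⟩, ⟨8, 9, 9, 8⟩, ⟨0, 5, 1, 4⟩, ⟨2, 1, 3, 0⟩,
        ⟨4, 3, 5, 2⟩]), (2, [⟨0, 6, 8, 1⟩, ⟨4, 0, 8, 5⟩, ⟨2, 5, 8, 3⟩, ⟨6, 3, 8, 6⟩, ⟨0, 8, 4, 2⟩,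
        ⟨6, 0, 9, 3⟩, ⟨0, 3, 9, 7⟩, ⟨4, 5, 9, 1⟩, ⟨0, 2, 5, 9⟩, ⟨2, 3, 7, 4⟩, ⟨0, 1, 7, 3⟩,
        ⟨2, 0, 4, 8⟩, ⟨4, 1, 6, 7⟩, ⟨2, 9, 6, 1⟩, ⟨4, 6, 7, 9⟩, ⟨0, 9, 3, 5⟩, ⟨0, 7, 2, 8⟩,
        ⟨0, 4, 6, 6⟩, ⟨2, 6, 9, 5⟩, ⟨2, 7, 5, 6⟩, ⟨6, 4, 7, 8⟩])]⟩,
    ⟨10, 8, ![0, 1, 2, 3, 4, 5, 6, 7, 9, 8],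
      develop [8] [(1, [⟨8, 8, 9, 9⟩, ⟨8, 9, 9, 8⟩]), (4, [⟨0, 5, 4, 1⟩]), (8, [⟨0, 2, 9, 7⟩,
        ⟨0, 6, 1, 8⟩, ⟨0, 4, 8, 2⟩, ⟨0, 9, 2, 3⟩, ⟨0, 7, 3, 6⟩])]⟩,
    ⟨10, 10, ![0, 1, 2, 3, 4, 5, 6, 7, 8, 9],
      develop [9] [(9, [⟨0, 4, 2, 3⟩, ⟨0, 8, 3, 6⟩, ⟨0, 5, 1, 8⟩, ⟨0, 2, 9, 7⟩, ⟨0, 9, 4, 1⟩])]⟩,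
    ⟨11, 3, ![0, 1, 2, 6, 7, 8, 3, 4, 5, 10, 9],
      develop [3, 3, 3] [(1, [⟨9, 9, 10, 10⟩, ⟨9, 10, 10, 9⟩]), (3, [⟨0, 8, 9, 1⟩, ⟨6, 5, 9, 4⟩,
        ⟨3, 0, 9, 8⟩, ⟨6, 1, 10, 0⟩, ⟨0, 7, 10, 3⟩, ⟨3, 4, 10, 7⟩, ⟨3, 3, 4, 2⟩, ⟨6, 4, 7, 1⟩,
        ⟨0, 4, 3, 2⟩, ⟨3, 5, 6, 9⟩, ⟨0, 3, 1, 10⟩, ⟨0, 6, 7, 4⟩, ⟨0, 5, 5, 8⟩, ⟨0, 2, 4, 9⟩,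
        ⟨0, 1, 8, 7⟩, ⟨0, 9, 6, 6⟩, ⟨3, 10, 7, 0⟩, ⟨3, 7, 6, 10⟩, ⟨3, 8, 8, 6⟩])]⟩,
    ⟨11, 5, ![0, 1, 2, 3, 6, 7, 4, 5, 8, 10, 9],
      develop [4, 4] [(1, [⟨8, 9, 9, 10⟩, ⟨8, 10, 10, 9⟩, ⟨9, 8, 10, 10⟩, ⟨9, 9, 10, 8⟩]), (2,
        [⟨0, 6, 2, 4⟩, ⟨4, 1, 6, 3⟩, ⟨4, 5, 6, 7⟩]), (4, [⟨0, 4, 1, 8⟩, ⟨4, 8, 5, 1⟩,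
        ⟨0, 9, 7, 5⟩, ⟨0, 2, 6, 9⟩, ⟨0, 10, 4, 3⟩, ⟨0, 5, 5, 10⟩, ⟨0, 7, 8, 1⟩, ⟨4, 4, 10, 5⟩,
        ⟨4, 7, 9, 2⟩, ⟨0, 1, 10, 2⟩, ⟨0, 3, 9, 6⟩, ⟨4, 2, 8, 6⟩])]⟩,
    ⟨11, 7, ![0, 1, 2, 3, 4, 5, 7, 6, 9, 8, 10],
      develop [2, 2, 2, 2, 2] [(1, [⟨0, 2, 1, 3⟩, ⟨4, 9, 5, 8⟩, ⟨8, 0, 9, 1⟩, ⟨2, 7, 3, 6⟩,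
        ⟨6, 4, 7, 5⟩, ⟨6, 8, 7, 9⟩, ⟨8, 7, 9, 6⟩]), (2, [⟨2, 0, 8, 5⟩, ⟨0, 4, 2, 9⟩,
        ⟨2, 8, 10, 1⟩, ⟨0, 9, 4, 1⟩, ⟨0, 8, 3, 4⟩, ⟨6, 7, 8, 8⟩, ⟨2, 3, 9, 8⟩, ⟨0, 6, 10, 8⟩,
        ⟨6, 9, 9, 10⟩, ⟨4, 8, 9, 2⟩, ⟨0, 10, 9, 5⟩, ⟨8, 2, 10, 4⟩, ⟨4, 5, 8, 1⟩, ⟨0, 3, 8, 6⟩,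
        ⟨0, 5, 7, 7⟩, ⟨0, 7, 5, 10⟩, ⟨0, 1, 6, 2⟩, ⟨4, 7, 6, 3⟩, ⟨2, 6, 6, 0⟩, ⟨4, 0, 10, 7⟩,
        ⟨2, 4, 5, 7⟩, ⟨2, 1, 7, 10⟩, ⟨2, 10, 4, 3⟩, ⟨4, 2, 7, 0⟩, ⟨6, 5, 10, 2⟩])]⟩,
    ⟨11, 9, ![0, 1, 2, 3, 4, 5, 6, 7, 8, 10, 9],
      develop [9] [(1, [⟨9, 9, 10, 10⟩, ⟨9, 10, 10, 9⟩]), (9, [⟨0, 9, 4, 7⟩, ⟨0, 2, 1, 8⟩,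
        ⟨0, 1, 9, 5⟩, ⟨0, 6, 10, 4⟩, ⟨0, 5, 2, 6⟩, ⟨0, 10, 3, 2⟩])]⟩,
    ⟨11, 11, ![0, 1, 2, 3, 4, 5, 6, 7, 8, 9, 10],
      develop [11] [(11, [⟨0, 10, 3, 4⟩, ⟨0, 3, 2, 10⟩, ⟨0, 2, 5, 3⟩, ⟨0, 7, 1, 5⟩,
        ⟨0, 6, 4, 9⟩])]⟩,
    ⟨13, 5, ![0, 1, 2, 3, 6, 7, 4, 5, 10, 11, 8, 9, 12],
      develop [4, 4, 4] [(2, [⟨0, 1, 2, 3⟩, ⟨4, 11, 6, 9⟩, ⟨4, 8, 6, 10⟩]), (4, [⟨0, 2, 1, 6⟩,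
        ⟨0, 3, 12, 8⟩, ⟨4, 3, 11, 0⟩, ⟨4, 4, 5, 1⟩, ⟨4, 7, 8, 2⟩, ⟨4, 9, 12, 3⟩, ⟨4, 1, 10, 12⟩,
        ⟨4, 2, 9, 4⟩, ⟨0, 10, 10, 2⟩, ⟨8, 3, 9, 10⟩, ⟨8, 4, 10, 9⟩, ⟨8, 6, 12, 4⟩, ⟨0, 6, 9, 9⟩,
        ⟨0, 12, 11, 4⟩, ⟨0, 7, 5, 11⟩, ⟨0, 4, 7, 5⟩, ⟨0, 8, 4, 12⟩, ⟨0, 9, 6, 7⟩,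
        ⟨0, 11, 8, 10⟩])]⟩,
    ⟨14, 8, ![0, 1, 2, 3, 4, 5, 6, 7, 10, 11, 8, 9, 13, 12],
      develop [4, 4, 4] [(1, [⟨12, 12, 13, 13⟩, ⟨12, 13, 13, 12⟩]), (2, [⟨0, 10, 2, 8⟩,
        ⟨8, 4, 10, 6⟩, ⟨4, 0, 6, 2⟩, ⟨8, 9, 10, 11⟩]), (4, [⟨0, 8, 1, 4⟩, ⟨0, 5, 9, 13⟩,
        ⟨4, 13, 5, 8⟩, ⟨0, 13, 11, 3⟩, ⟨0, 6, 7, 2⟩, ⟨0, 4, 12, 1⟩, ⟨4, 6, 13, 5⟩, ⟨0, 11, 5, 6⟩,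
        ⟨0, 12, 10, 5⟩, ⟨4, 1, 9, 6⟩, ⟨0, 9, 4, 7⟩, ⟨8, 6, 9, 9⟩, ⟨8, 1, 12, 7⟩, ⟨4, 9, 11, 12⟩,
        ⟨4, 2, 8, 3⟩, ⟨4, 10, 10, 0⟩, ⟨0, 3, 6, 12⟩, ⟨4, 8, 12, 11⟩, ⟨8, 11, 13, 3⟩,
        ⟨0, 2, 13, 9⟩, ⟨0, 1, 8, 10⟩])]⟩,
    ⟨14, 10, ![0, 1, 2, 3, 4, 5, 6, 7, 8, 9, 11, 10, 13, 12],
      develop [2, 2, 2, 2, 2, 2] [(1, [⟨12, 12, 13, 13⟩, ⟨12, 13, 13, 12⟩, ⟨0, 9, 1, 8⟩,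
        ⟨2, 6, 3, 7⟩, ⟨4, 3, 5, 2⟩, ⟨6, 5, 7, 4⟩, ⟨8, 1, 9, 0⟩]), (2, [⟨0, 10, 12, 1⟩,
        ⟨2, 3, 12, 4⟩, ⟨6, 1, 12, 3⟩, ⟨10, 5, 12, 9⟩, ⟨4, 8, 12, 7⟩, ⟨8, 6, 12, 11⟩, ⟨2, 1, 8, 5⟩,
        ⟨8, 0, 11, 5⟩, ⟨6, 2, 13, 1⟩, ⟨0, 1, 11, 7⟩, ⟨2, 0, 4, 13⟩, ⟨2, 11, 5, 1⟩, ⟨6, 9, 11, 0⟩,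
        ⟨4, 1, 13, 6⟩, ⟨2, 12, 10, 0⟩, ⟨4, 9, 7, 1⟩, ⟨2, 9, 6, 11⟩, ⟨2, 8, 13, 3⟩, ⟨2, 7, 9, 12⟩,
        ⟨0, 8, 2, 13⟩, ⟨0, 11, 3, 4⟩, ⟨2, 4, 7, 6⟩, ⟨2, 10, 11, 9⟩, ⟨4, 7, 10, 9⟩, ⟨8, 4, 13, 9⟩,
        ⟨0, 7, 13, 11⟩, ⟨10, 11, 13, 5⟩, ⟨4, 10, 8, 11⟩, ⟨0, 5, 4, 6⟩, ⟨6, 13, 8, 7⟩,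
        ⟨6, 3, 10, 10⟩, ⟨10, 3, 11, 6⟩, ⟨0, 6, 9, 2⟩, ⟨0, 4, 10, 12⟩, ⟨4, 11, 11, 13⟩,
        ⟨0, 13, 7, 5⟩, ⟨0, 3, 8, 9⟩, ⟨0, 2, 6, 10⟩, ⟨0, 12, 5, 3⟩, ⟨4, 5, 9, 3⟩, ⟨4, 12, 6, 8⟩,
        ⟨6, 12, 9, 11⟩, ⟨8, 13, 10, 2⟩])]⟩ ]

lemma isValid_of_mem_frameDesigns : ∀ D ∈ frameDesigns, D.IsValid := by
  decide +kernel

lemma isValid_of_mem_tournamentDesigns : ∀ D ∈ tournamentDesigns, D.IsValid := by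
  decide +kernel

/-! ### Families of frames -/

lemma hasFrameOfType_of_mem {l : List ℕ} (hl : l ∈ frameDesigns.map FrameDesign.groupSizes) :
    HasFrameOfType l := by
  obtain ⟨D, hD, rfl⟩ := List.mem_map.1 hl
  exact (isValid_of_mem_frameDesigns D hD).hasFrameOfType

lemma HasFrameOfType.cons_zero {l : List ℕ} (h : HasFrameOfType l) : HasFrameOfType (0 :: l) :=
  h.extend (Fin.succEmb _) (fun _ => rfl) (Fin.cases (fun _ => rfl) fun i hi => (hi ⟨i, rfl⟩).elim)

lemma HasFrameOfType.swap {a b : ℕ} {l : List ℕ} (h : HasFrameOfType (a :: b :: l)) :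
    HasFrameOfType (b :: a :: l) := by
  refine h.reindex (Equiv.swap 0 1) (Fin.cases rfl (Fin.cases rfl fun i => ?_))
  rw [Equiv.swap_apply_of_ne_of_ne (by simp) (by simp [Fin.ext_iff])]
  rfl

lemma HasTransversalDesign.hasFrameOfType {k m : ℕ} (h : HasTransversalDesign k m)
    (w : Fin k → Fin m → ℕ)
    (hw : ∀ b : Fin k → Fin m, HasFrameOfType (List.ofFn fun c => w c (b c))) :
    HasFrameOfType (List.ofFn fun c => ∑ z, w c z) := by
  obtain ⟨ι, _, B, hB⟩ := h
  exact hasFrameOfType_ofFn.2 (HasFrame.wilson hB w fun b => hasFrameOfType_ofFn.1 (hw (B b)))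

lemma sum_ite_lt {m s : ℕ} (hs : s ≤ m) (c d : ℕ) :
    ∑ z : Fin m, (if z.val < s then c else d) = s * c + (m - s) * d := by
  rw [Fin.sum_univ_eq_sum_range (fun z => if z < s then c else d), ← Nat.add_sub_cancel' hs,
    Finset.sum_range_add, Finset.sum_congr rfl fun z hz => if_pos (Finset.mem_range.1 hz)]
  simp

lemma HasTransversalDesign.hasFrameOfType_replicate {k m a : ℕ} (h : HasTransversalDesign k m)
    (ha : HasFrameOfType (List.replicate k a)) : HasFrameOfType (List.replicate k (m * a)) := by
  simpa using h.hasFrameOfType (fun _ _ => a) fun _ => by simpa using ha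

lemma HasTransversalDesign.hasFrameOfType_truncate {m s : ℕ} (h : HasTransversalDesign 5 m)
    (hs : s ≤ m) : HasFrameOfType [s, m, m, m, m] := by
  have frame := h.hasFrameOfType ![fun z => if z.val < s then 1 else 0, 1, 1, 1, 1] fun b => by
    change HasFrameOfType [if (b 0).val < s then 1 else 0, 1, 1, 1, 1]
    split_ifs
    · exact hasFrameOfType_of_mem (by decide)
    · exact (hasFrameOfType_of_mem (by decide)).cons_zero
  simpa [sum_ite_lt hs] using frame

lemma HasTransversalDesign.hasFrameOfType_truncate_two {m s t : ℕ}
    (h : HasTransversalDesign 6 m) (hs : s ≤ m) (ht : t ≤ m) :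
    HasFrameOfType [2 * s, 2 * t, 2 * m, 2 * m, 2 * m, 2 * m] := by
  have frame := h.hasFrameOfType ![fun z => if z.val < s then 2 else 0,
      fun z => if z.val < t then 2 else 0, 2, 2, 2, 2] fun b => by
    change HasFrameOfType [if (b 0).val < s then 2 else 0, if (b 1).val < t then 2 else 0,
      2, 2, 2, 2]
    split_ifs
    · exact hasFrameOfType_of_mem (by decide)
    · exact (hasFrameOfType_of_mem (by decide)).cons_zero.swap
    · exact (hasFrameOfType_of_mem (by decide)).cons_zero
    · exact (hasFrameOfType_of_mem (by decide)).cons_zero.cons_zero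
  simpa [sum_ite_lt hs, sum_ite_lt ht, mul_comm] using frame

lemma HasTransversalDesign.hasFrameOfType_reweight {m r : ℕ} (h : HasTransversalDesign 6 m)
    (hr : r ≤ 2 * m) : HasFrameOfType [2 * r, 2 * m, 2 * m, 2 * m, 2 * m, 2 * m] := by
  obtain ⟨s, t, hs, ht, rfl⟩ : ∃ s t, s ≤ m ∧ t ≤ m ∧ r = s + t :=
    ⟨min r m, r - m, by omega, by omega, by omega⟩
  have frame := h.hasFrameOfType
      ![fun z => (if z.val < s then 2 else 0) + if z.val < t then 2 else 0, 2, 2, 2, 2, 2]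
      fun b => by
    change HasFrameOfType [(if (b 0).val < s then 2 else 0) + if (b 0).val < t then 2 else 0,
      2, 2, 2, 2, 2]
    split_ifs
    · exact hasFrameOfType_of_mem (by decide)
    · exact hasFrameOfType_of_mem (by decide)
    · exact hasFrameOfType_of_mem (by decide)
    · exact (hasFrameOfType_of_mem (by decide)).cons_zero
  simpa [Finset.sum_add_distrib, sum_ite_lt hs, sum_ite_lt ht, mul_comm, add_mul] using frame

/-! ### Orders below 138 -/

/-- The pairs `(n, k)` for which no tournament is asserted to exist. -/
def exceptions : List (ℕ × ℕ) :=
  [(2, 2), (3, 3), (4, 2), (6, 6), (5, 3), (6, 2), (12, 2), (12, 6), (12, 8), (13, 3), (13, 7),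
    (14, 2), (14, 6), (15, 3), (15, 7), (15, 9), (16, 2), (16, 10), (17, 3), (17, 7), (17, 11),
    (18, 2), (18, 10), (19, 3), (19, 11), (20, 2), (20, 14), (21, 3), (21, 11), (22, 2), (22, 14),
    (23, 15), (24, 2), (24, 14), (25, 15)]

/-- The pairs `(n, k)` for which a tournament is to be constructed; the trivial orders `n ≤ 1` are
included because they occur as groups of frames. -/
def IsRequired (n k : ℕ) : Prop := k ≤ n ∧ Even (n - k) ∧ (n, k) ∉ exceptions

-- The exceptions of order `n` are selected first, so that the kernel does this once for each `n`.
instance (n k : ℕ) : Decidable (IsRequired n k) :=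
  decidable_of_iff
    (k ≤ n ∧ Even (n - k) ∧ k ∉ (exceptions.filter fun p => p.1 = n).map Prod.snd)
    (by simp [IsRequired])

/-- A tournament of order `n` with `k` spouse pairs arises by filling the groups of a frame with
required tournaments of smaller order, on `ε` additional players. -/
def IsReducible (n k : ℕ) : Prop :=
  ∃ l, HasFrameOfType l ∧ (∀ w ∈ l, w < l.sum) ∧ ∃ ε ≤ 1, ∃ j,
    List.Forall₂ (fun w j => IsRequired (w + ε) (j + ε)) l j ∧ l.sum + ε = n ∧ j.sum + ε = k

/-- The finite set of natural numbers `⋃ x ∈ l, f x`, where sets are encoded by the binary digits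
of numbers. -/
def bitUnion {X : Type*} (l : List X) (f : X → ℕ) : ℕ := l.foldr (fun x S => f x ||| S) 0

lemma testBit_bitUnion {X : Type*} {l : List X} {f : X → ℕ} {i : ℕ} :
    (bitUnion l f).testBit i ↔ ∃ x ∈ l, (f x).testBit i := by
  induction l with
  | nil => simp [bitUnion]
  | cons x l ih =>
    rw [bitUnion, List.foldr_cons, Nat.testBit_or, Bool.or_eq_true, List.exists_mem_cons_iff]
    exact or_congr_right ih

/-- The numbers `k`, as a set of bits, for which filling the groups of a frame of type `l` with
tournaments on `ε` additional players gives a tournament with `k` spouse pairs. -/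
def fillCounts (ε : ℕ) (l : List ℕ) : ℕ :=
  l.foldr (fun w S => bitUnion ((List.range (w + 1)).filter fun j => IsRequired (w + ε) (j + ε))
    fun j => S <<< j) (1 <<< ε)

lemma exists_forall₂_of_testBit_fillCounts {ε k : ℕ} {l : List ℕ}
    (h : (fillCounts ε l).testBit k) :
    ∃ j, List.Forall₂ (fun w j => IsRequired (w + ε) (j + ε)) l j ∧ j.sum + ε = k := by
  induction l generalizing k with
  | nil =>
    refine ⟨[], .nil, ?_⟩
    simpa [fillCounts, Nat.one_shiftLeft, Nat.testBit_two_pow] using h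
  | cons w l ih =>
    obtain ⟨i, hi, hk⟩ := testBit_bitUnion.1 h
    rw [Nat.testBit_shiftLeft, Bool.and_eq_true, decide_eq_true_eq] at hk
    obtain ⟨j, hj, hjk⟩ := ih hk.2
    refine ⟨i :: j, .cons (of_decide_eq_true (List.mem_filter.1 hi).2) hj, ?_⟩
    rw [List.sum_cons]
    have := hk.1
    omega

/-- Types of frames that suffice for all orders below 138. -/
def smallFrameTypes : List (List ℕ) :=
  frameDesigns.map FrameDesign.groupSizes ++ [[3, 3, 3, 3], [6, 6, 6, 6]] ++
  ([4, 7, 8, 9].flatMap fun m => (List.range (m + 1)).map fun s => [s, m, m, m, m]) ++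
  ([5, 7, 9, 11, 13].flatMap fun m => (List.range (m + 1)).flatMap fun t =>
    (List.range (t + 1)).map fun s => [2 * s, 2 * t, 2 * m, 2 * m, 2 * m, 2 * m]) ++
  (List.range 11).map fun s => [2 * s, 10, 10, 10, 10, 10]

/-- The pairs `(n, k)`, encoded as bits `256 * n + k`, that are reached by explicit tournaments and
by filling frames. -/
def reached : ℕ :=
  bitUnion tournamentDesigns (fun D => 1 <<< (256 * D.order + D.spouses)) |||
    bitUnion [0, 1] fun ε => bitUnion smallFrameTypes fun l =>
      fillCounts ε l <<< (256 * (l.sum + ε))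

lemma testBit_reached {n k : ℕ} (hn : n < 138) (h : IsRequired n k) :
    reached.testBit (256 * n + k) := by
  have required_or_reached :
      (bitUnion (List.range 138) fun n => bitUnion ((List.range (n + 1)).filter (IsRequired n))
        fun k => 1 <<< (256 * n + k)) ||| reached = reached := by
    decide +kernel
  rw [← required_or_reached, Nat.testBit_or, Bool.or_eq_true]
  refine .inl (testBit_bitUnion.2 ⟨n, List.mem_range.2 hn, testBit_bitUnion.2 ⟨k, ?_, ?_⟩⟩)
  · exact List.mem_filter.2 ⟨List.mem_range.2 (Nat.lt_succ_of_le h.1), decide_eq_true h⟩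
  · rw [Nat.one_shiftLeft, Nat.testBit_two_pow_self]

lemma hasFrameOfType_of_mem_smallFrameTypes {l : List ℕ} (hl : l ∈ smallFrameTypes) :
    HasFrameOfType l := by
  have : Fact (Nat.Prime 2) := ⟨Nat.prime_two⟩
  have : Fact (Nat.Prime 3) := ⟨Nat.prime_three⟩
  have td_four : HasTransversalDesign 4 3 := hasTransversalDesign_zmod (by norm_num)
  have td_five : ∀ m ∈ [4, 7, 8, 9], HasTransversalDesign 5 m := by
    simp only [List.forall_mem_cons, List.not_mem_nil, false_imp_iff, implies_true, and_true]
    exact ⟨hasTransversalDesign_primePow (p := 2) (e := 2) (by norm_num) (by norm_num),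
      hasTransversalDesign_zmod (by norm_num),
      hasTransversalDesign_primePow (p := 2) (e := 3) (by norm_num) (by norm_num),
      hasTransversalDesign_primePow (p := 3) (e := 2) (by norm_num) (by norm_num)⟩
  have td_six : ∀ m ∈ [5, 7, 9, 11, 13], HasTransversalDesign 6 m := by
    simp only [List.forall_mem_cons, List.not_mem_nil, false_imp_iff, implies_true, and_true]
    exact ⟨hasTransversalDesign_zmod (by norm_num), hasTransversalDesign_zmod (by norm_num),
      hasTransversalDesign_primePow (p := 3) (e := 2) (by norm_num) (by norm_num),
      hasTransversalDesign_zmod (by norm_num), hasTransversalDesign_zmod (by norm_num)⟩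
  simp only [smallFrameTypes, List.mem_append, List.mem_flatMap, List.mem_map (b := l),
    List.mem_range, Nat.lt_succ_iff, List.mem_pair] at hl
  obtain (((hl | rfl | rfl) | ⟨m, hm, s, hs, rfl⟩) | ⟨m, hm, t, ht, s, hs, rfl⟩) | ⟨s, hs, rfl⟩ :=
    hl
  · exact hasFrameOfType_of_mem (List.mem_map.2 hl)
  · exact td_four.hasFrameOfType_replicate (a := 1) (hasFrameOfType_of_mem (by decide))
  · exact td_four.hasFrameOfType_replicate (a := 2) (hasFrameOfType_of_mem (by decide))
  · exact (td_five m hm).hasFrameOfType_truncate hs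
  · exact (td_six m hm).hasFrameOfType_truncate_two (hs.trans ht) ht
  · exact (td_six 5 (by simp)).hasFrameOfType_reweight (by omega)

lemma lt_sum_of_mem_smallFrameTypes :
    ∀ l ∈ smallFrameTypes, l.sum < 255 ∧ ∀ w ∈ l, w < l.sum := by
  decide +kernel

lemma lt_of_mem_tournamentDesigns : ∀ D ∈ tournamentDesigns, D.spouses < 256 := by
  decide +kernel

lemma hasTournament_or_isReducible_of_lt {n k : ℕ} (hn : n < 138) (h : IsRequired n k) :
    HasTournament n k ∨ IsReducible n k := by
  have k_le := h.1
  have bit := testBit_reached hn h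
  rw [reached, Nat.testBit_or, Bool.or_eq_true, testBit_bitUnion, testBit_bitUnion] at bit
  refine bit.imp ?_ ?_
  · rintro ⟨D, hD, bit⟩
    rw [Nat.one_shiftLeft, Nat.testBit_two_pow, decide_eq_true_eq] at bit
    have := lt_of_mem_tournamentDesigns D hD
    obtain ⟨rfl, rfl⟩ : D.order = n ∧ D.spouses = k := by omega
    exact (isValid_of_mem_tournamentDesigns D hD).hasTournament
  · rintro ⟨ε, hε, bit⟩
    obtain ⟨l, hl, bit⟩ := testBit_bitUnion.1 bit
    rw [Nat.testBit_shiftLeft, Bool.and_eq_true, decide_eq_true_eq] at bit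
    obtain ⟨j, hj, sum_j⟩ := exists_forall₂_of_testBit_fillCounts bit.2
    have ε_le : ε ≤ 1 := by
      obtain rfl | rfl := List.mem_pair.1 hε
      exacts [zero_le_one, le_rfl]
    have sum_j_le : j.sum ≤ l.sum :=
      (hj.imp fun w j h => Nat.le_of_add_le_add_right h.1).flip.sum_le_sum
    obtain ⟨_, lt_sum⟩ := lt_sum_of_mem_smallFrameTypes l hl
    have := bit.1
    exact ⟨l, hasFrameOfType_of_mem_smallFrameTypes hl, lt_sum, ε, ε_le, j, hj, by omega, by omega⟩

/-! ### Existence of tournaments -/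

lemma isRequired_of_le {n k : ℕ} (hn : 26 ≤ n) (hk : k ≤ n) (he : Even (n - k)) :
    IsRequired n k := by
  have fst_lt : ∀ p ∈ exceptions, p.1 < 26 := by decide
  exact ⟨hk, he, fun h => (fst_lt _ h).not_ge hn⟩

lemma isRequired_extremal {r ε : ℕ} (hr : 4 ≤ r) (hε : ε ≤ 1) :
    IsRequired (2 * r + ε) (0 + ε) ∧ IsRequired (2 * r + ε) (2 * r + ε) := by
  have intermediate : ∀ p ∈ exceptions, p.1 < 8 ∨ 1 < p.2 ∧ p.2 < p.1 := by decide
  refine ⟨⟨by omega, by simp, fun h => ?_⟩, le_rfl, by simp, fun h => ?_⟩ <;>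
  · have := intermediate _ h
    omega

lemma five_le_minFac_of_coprime {m : ℕ} (h : m.Coprime 6) (hm : m ≠ 1) : 5 ≤ m.minFac := by
  have prime_minFac := Nat.minFac_prime hm
  have not_dvd : ¬ m.minFac ∣ 6 :=
    fun hd => prime_minFac.ne_one (Nat.eq_one_of_dvd_coprimes h m.minFac_dvd hd)
  by_contra! lt_five
  interval_cases m.minFac <;> revert prime_minFac not_dvd <;> decide

lemma exists_eq_five_mul_add {N : ℕ} (hN : 69 ≤ N) :
    ∃ m r, N = 5 * m + r ∧ 13 ≤ m ∧ m.Coprime 6 ∧ 4 ≤ r ∧ r ≤ 2 * m := by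
  obtain ⟨m, hm, le_m, m_le, le_m_add⟩ :
      ∃ m, (m % 6 = 1 ∨ m % 6 = 5) ∧ 13 ≤ m ∧ m ≤ (N - 4) / 5 ∧ (N - 4) / 5 ≤ m + 3 := by
    by_cases h : ((N - 4) / 5 + 1) % 6 ≤ 1
    · exact ⟨(N - 4) / 5 - ((N - 4) / 5 + 1) % 6, by omega⟩
    · exact ⟨(N - 4) / 5 - ((N - 4) / 5 + 5) % 6, by omega⟩
  have coprime : m.Coprime 6 := by
    rw [Nat.coprime_comm, Nat.Coprime, Nat.gcd_rec]
    rcases hm with h | h <;> rw [h] <;> rfl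
  exact ⟨m, N - 5 * m, by omega, le_m, coprime, by omega, by omega⟩

lemma exists_eq_sum_of_le {K m : ℕ} (h : K ≤ 5 * m) :
    ∃ a b c d e, K = a + b + c + d + e ∧ a ≤ m ∧ b ≤ m ∧ c ≤ m ∧ d ≤ m ∧ e ≤ m :=
  ⟨min K m, min (K - m) m, min (K - 2 * m) m, min (K - 3 * m) m, K - 4 * m, by omega⟩

lemma isReducible_of_le {n k : ℕ} (hn : 138 ≤ n) (h : IsRequired n k) : IsReducible n k := by
  obtain ⟨k_le, even_sub, -⟩ := h
  obtain ⟨m, r, N_eq, hm, coprime, hr, r_le⟩ := exists_eq_five_mul_add (N := n / 2) (by omega)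
  have : NeZero m := ⟨by omega⟩
  have td : HasTransversalDesign 6 m :=
    hasTransversalDesign_zmod (five_le_minFac_of_coprime coprime (by omega))
  have ε_le : n % 2 ≤ 1 := by omega
  have k_mod : k % 2 = n % 2 := by
    rw [Nat.even_sub k_le, Nat.even_iff, Nat.even_iff] at even_sub
    omega
  obtain ⟨s, K, required, K_le, k_eq⟩ : ∃ s K, IsRequired (2 * r + n % 2) (2 * s + n % 2) ∧
      K ≤ 5 * m ∧ k = 2 * (s + K) + n % 2 := by
    obtain h | h := le_total (k / 2) (5 * m)
    · exact ⟨0, k / 2, (isRequired_extremal hr ε_le).1, h, by omega⟩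
    · exact ⟨r, k / 2 - r, (isRequired_extremal hr ε_le).2, by omega, by omega⟩
  have required_group {a : ℕ} (ha : a ≤ m) : IsRequired (2 * m + n % 2) (2 * a + n % 2) :=
    isRequired_of_le (by omega) (by omega) (by rw [Nat.even_iff]; omega)
  obtain ⟨a, b, c, d, e, rfl, ha, hb, hc, hd, he⟩ := exists_eq_sum_of_le K_le
  refine ⟨_, td.hasFrameOfType_reweight r_le, ?_, n % 2, ε_le,
    [2 * s, 2 * a, 2 * b, 2 * c, 2 * d, 2 * e], ?_, ?_, ?_⟩
  · simp only [List.forall_mem_cons, List.sum_cons, List.sum_nil, List.not_mem_nil,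
      false_imp_iff, implies_true, and_true]
    omega
  · exact .cons required <| .cons (required_group ha) <| .cons (required_group hb) <|
      .cons (required_group hc) <| .cons (required_group hd) <| .cons (required_group he) .nil
  · simp only [List.sum_cons, List.sum_nil]
    omega
  · simp only [List.sum_cons, List.sum_nil]
    omega

theorem hasTournament_of_isRequired {n k : ℕ} (h : IsRequired n k) : HasTournament n k := by
  induction n using Nat.strong_induction_on generalizing k with
  | _ n ih =>
    obtain tournament | ⟨l, frame, lt_sum, ε, hε, j, hj, rfl, rfl⟩ :
        HasTournament n k ∨ IsReducible n k :=
      (lt_or_ge n 138).elim (hasTournament_or_isReducible_of_lt · h)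
        fun hn => .inr (isReducible_of_le hn h)
    · exact tournament
    · refine frame.fill hε (List.forall₂_iff_zip.2 ⟨hj.length_eq, fun {w i} hw => ?_⟩)
      exact ih _ (Nat.add_lt_add_right (lt_sum w (List.of_mem_zip hw).1) ε)
        ((List.forall₂_iff_zip.1 hj).2 hw)

end MixedDoubles

/-- For every `n ≥ 2`, `k ≤ n` with `n - k` even, a CMDRR(n,k) exists, except
for the 4 known exceptions and the 31 possible exceptions. -/
theorem cmdrr_existence (n k : ℕ) (hn : 2 ≤ n) (hk : k ≤ n) (he : Even (n - k))
    (hex : (n, k) ∉ ([(2,2),(3,3),(4,2),(6,6),(5,3),(6,2),(12,2),(12,6),(12,8),(13,3),(13,7),(14,2),(14,6),(15,3),(15,7),(15,9),(16,2),(16,10),(17,3),(17,7),(17,11),(18,2),(18,10),(19,3),(19,11),(20,2),(20,14),(21,3),(21,11),(22,2),(22,14),(23,15),(24,2),(24,14),(25,15)] : List (ℕ × ℕ))) :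
    Nonempty (CMDRR n k) :=
  (MixedDoubles.hasTournament_of_isRequired ⟨hk, he, hex⟩).nonempty_cmdrr
end

section
/- There exists a CMDRR(16,6) whose 125 games can be partitioned into 25 rounds of 5 games each, such that each player plays in at most one game per round. -/
open scoped Classical

/-!
The tournament is invariant under a permutation `σ` of order five that fixes one player and rotates
the other fifteen in three blocks of five. Five base rounds determine the schedule; the remaining
twenty are their images under the powers of `σ`.

All spouse pairs consist of a man and a woman with the same label. A permutation `μ` commuting with
`σ` records both the spouses and the doubled oppositions: its fixed points are the labels of the
spouse pairs, and any other player `p` opposes the player `μ p` of the same sex twice. Since both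
the games and these prescribed numbers are `σ`-invariant, it suffices to count the encounters of `p`
and `q` when `p` is one of four representatives of the orbits of `σ`.
-/

namespace Game

open Equiv (Perm)

variable {n : ℕ} {m w : Fin n} {a b : Fin n × Fin n} {g : Game n}

theorem exists_mk_eq_and_iff {Q : Fin n × Fin n → Fin n × Fin n → Prop} :
    (∃ c d, s(a, b) = s(c, d) ∧ Q c d) ↔ Q a b ∨ Q b a := by
  simp only [Sym2.eq_iff]
  grind

theorem valid_mk : valid s(a, b) ↔ a.1 ≠ b.1 ∧ a.2 ≠ b.2 :=
  exists_mk_eq_and_iff.trans (by grind)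

theorem manIn_mk : manIn m s(a, b) ↔ a.1 = m ∨ b.1 = m :=
  exists_mk_eq_and_iff (Q := fun c _ => c.1 = m)

theorem womanIn_mk : womanIn w s(a, b) ↔ a.2 = w ∨ b.2 = w :=
  exists_mk_eq_and_iff (Q := fun c _ => c.2 = w)

theorem partners_mk : partners m w s(a, b) ↔ (m, w) = a ∨ (m, w) = b :=
  Sym2.mem_iff

theorem opposesMW_mk :
    opposesMW m w s(a, b) ↔ (a.1 = m ∧ b.2 = w) ∨ (b.1 = m ∧ a.2 = w) :=
  exists_mk_eq_and_iff

theorem opposesMM_mk {m' : Fin n} :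
    opposesMM m m' s(a, b) ↔ (a.1 = m ∧ b.1 = m') ∨ (b.1 = m ∧ a.1 = m') :=
  exists_mk_eq_and_iff

theorem opposesWW_mk {w' : Fin n} :
    opposesWW w w' s(a, b) ↔ (a.2 = w ∧ b.2 = w') ∨ (b.2 = w ∧ a.2 = w') :=
  exists_mk_eq_and_iff

theorem partners_or_opposesMW (hm : manIn m g) (hw : womanIn w g) :
    partners m w g ∨ opposesMW m w g := by
  induction g using Sym2.ind with | _ a b
  rw [manIn_mk] at hm
  rw [womanIn_mk] at hw
  rw [partners_mk, opposesMW_mk]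
  grind

theorem valid_of_not_opposes (hM : ∀ m, ¬ opposesMM m m g) (hW : ∀ w, ¬ opposesWW w w g) :
    g.valid := by
  induction g using Sym2.ind with | _ a b
  simp only [opposesMM_mk, opposesWW_mk] at hM hW
  rw [valid_mk]
  grind

end Game

section Mates

variable {n : ℕ} {μ : Equiv.Perm (Fin n)} {p q : Fin n}

/-- The number of times man `p` and woman `q` partner (equally, oppose) in a tournament with mate
permutation `μ`: never if they are spouses, which is to say that `p = q` is a fixed point of `μ`,
and once otherwise. -/
def mixedCount (μ : Equiv.Perm (Fin n)) (p q : Fin n) : ℕ :=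
  if p = q ∧ μ p = p then 0 else 1

/-- The number of times players `p` and `q` of the same sex oppose in a tournament with mate
permutation `μ`: once, or twice if `q` is the mate `μ p`. -/
def sameSexCount (μ : Equiv.Perm (Fin n)) (p q : Fin n) : ℕ :=
  if p = q then 0 else if μ p = q then 2 else 1

theorem mixedCount_self (hp : μ p = p) : mixedCount μ p p = 0 :=
  if_pos ⟨rfl, hp⟩

theorem sameSexCount_self (μ : Equiv.Perm (Fin n)) (p : Fin n) : sameSexCount μ p p = 0 :=
  if_pos rfl

theorem mixedCount_of_not (h : ¬ (p = q ∧ μ p = p)) : mixedCount μ p q = 1 :=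
  if_neg h

theorem sameSexCount_of_ne (hq : q ≠ p) (hμ : q ≠ μ p) : sameSexCount μ p q = 1 := by
  rw [sameSexCount, if_neg hq.symm, if_neg hμ.symm]

theorem exists_sameSexCount_eq_two (hp : μ p ≠ p) :
    ∃ q, q ≠ p ∧ μ q ≠ q ∧ sameSexCount μ p q = 2 ∧
      ∀ q', q' ≠ p → q' ≠ q → sameSexCount μ p q' = 1 :=
  ⟨μ p, hp, μ.injective.ne hp, by rw [sameSexCount, if_neg hp.symm, if_pos rfl],
    fun _ => sameSexCount_of_ne⟩

/-- The games `G` form a complete mixed doubles round robin tournament whose spouse pairs are the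
pairs `(p, p)` with `μ p = p`, and in which every unspoused player `p` opposes `μ p` twice. -/
structure IsMatedRoundRobin (μ : Equiv.Perm (Fin n)) (G : Multiset (Game n)) : Prop where
  countP_partners : ∀ m w, G.countP (Game.partners m w) = mixedCount μ m w
  countP_opposesMW : ∀ m w, G.countP (Game.opposesMW m w) = mixedCount μ m w
  countP_opposesMM : ∀ m m', G.countP (Game.opposesMM m m') = sameSexCount μ m m'
  countP_opposesWW : ∀ w w', G.countP (Game.opposesWW w w') = sameSexCount μ w w'

/-- The spouse pairs `(p, p)` belonging to the fixed points `p` of the mate permutation `μ`. -/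
def spousePairs (μ : Equiv.Perm (Fin n)) : Finset (Fin n × Fin n) :=
  Finset.diag {p | μ p = p}

theorem mem_spousePairs {m w : Fin n} : (m, w) ∈ spousePairs μ ↔ m = w ∧ μ m = m := by
  simp [spousePairs, and_comm]

theorem mem_image_fst_spousePairs : p ∈ (spousePairs μ).image Prod.fst ↔ μ p = p := by
  simp [mem_spousePairs]

theorem mem_image_snd_spousePairs : p ∈ (spousePairs μ).image Prod.snd ↔ μ p = p := by
  simp +contextual [mem_spousePairs]

namespace IsMatedRoundRobin

variable {G : Multiset (Game n)} {g : Game n}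

theorem valid (h : IsMatedRoundRobin μ G) (hg : g ∈ G) : g.valid := by
  refine Game.valid_of_not_opposes (fun m hm => ?_) fun w hw => ?_
  · have hself : G.countP (Game.opposesMM m m) = 0 := by
      rw [h.countP_opposesMM, sameSexCount_self]
    exact Multiset.countP_eq_zero.1 hself g hg hm
  · have hself : G.countP (Game.opposesWW w w) = 0 := by
      rw [h.countP_opposesWW, sameSexCount_self]
    exact Multiset.countP_eq_zero.1 hself g hg hw

theorem not_manIn_and_womanIn (h : IsMatedRoundRobin μ G) (hg : g ∈ G) (hp : μ p = p) :
    ¬ (g.manIn p ∧ g.womanIn p) := by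
  rintro ⟨hm, hw⟩
  have hpartners : G.countP (Game.partners p p) = 0 := by
    rw [h.countP_partners, mixedCount_self hp]
  have hopposes : G.countP (Game.opposesMW p p) = 0 := by
    rw [h.countP_opposesMW, mixedCount_self hp]
  rcases Game.partners_or_opposesMW hm hw with hpp | hpp
  · exact Multiset.countP_eq_zero.1 hpartners g hg hpp
  · exact Multiset.countP_eq_zero.1 hopposes g hg hpp

/-- The tournament `CMDRR n k` with games `G`, where `k` is the number of fixed points of `μ`. -/
def toCMDRR {k : ℕ} (h : IsMatedRoundRobin μ G) (hk : (spousePairs μ).card = k) : CMDRR n k where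
  spouses := spousePairs μ
  spouses_card := hk
  spouses_inj1 := by
    rintro ⟨m, w⟩ hp ⟨m', w'⟩ hq (rfl : m = m')
    rw [← (mem_spousePairs.1 hp).1, ← (mem_spousePairs.1 hq).1]
  spouses_inj2 := by
    rintro ⟨m, w⟩ hp ⟨m', w'⟩ hq (rfl : w = w')
    rw [(mem_spousePairs.1 hp).1, (mem_spousePairs.1 hq).1]
  games := G
  valid _ := h.valid
  no_spouse_game := by
    rintro g hg ⟨m, w⟩ hs
    obtain ⟨rfl, hm⟩ := mem_spousePairs.1 hs
    exact h.not_manIn_and_womanIn hg hm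
  partners_once m w hs := by
    rw [h.countP_partners, mixedCount_of_not (mem_spousePairs.not.1 hs)]
  opposesMW_once m w hs := by
    rw [h.countP_opposesMW, mixedCount_of_not (mem_spousePairs.not.1 hs)]
  spousedM_opposes m hm m' hne := by
    rw [h.countP_opposesMM, sameSexCount_of_ne hne]
    rwa [mem_image_fst_spousePairs.1 hm]
  spousedW_opposes w hw w' hne := by
    rw [h.countP_opposesWW, sameSexCount_of_ne hne]
    rwa [mem_image_snd_spousePairs.1 hw]
  unspousedM_opposes m hm := by
    simp only [h.countP_opposesMM, mem_image_fst_spousePairs] at hm ⊢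
    exact exists_sameSexCount_eq_two hm
  unspousedW_opposes w hw := by
    simp only [h.countP_opposesWW, mem_image_snd_spousePairs] at hw ⊢
    exact exists_sameSexCount_eq_two hw

end IsMatedRoundRobin

end Mates

section Invariance

variable {α β : Type*}

theorem apply_zpow_apply_zpow {σ : Equiv.Perm α} {f : α → α → β}
    (hf : ∀ p q, f (σ p) (σ q) = f p q) (i : ℤ) (p q : α) :
    f ((σ ^ i) p) ((σ ^ i) q) = f p q := by
  induction i generalizing p q with
  | zero => rfl
  | succ i ih => rw [zpow_add_one, Equiv.Perm.mul_apply, Equiv.Perm.mul_apply, ih, hf]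
  | pred i ih =>
    rw [zpow_sub_one, Equiv.Perm.mul_apply, Equiv.Perm.mul_apply, ih, ← hf,
      Equiv.Perm.inv_def, Equiv.apply_symm_apply, Equiv.apply_symm_apply]

theorem eq_of_eq_on_representatives {σ : Equiv.Perm α} {R : Set α}
    (hR : ∀ p, ∃ r ∈ R, σ.SameCycle r p) {f g : α → α → β}
    (hf : ∀ p q, f (σ p) (σ q) = f p q) (hg : ∀ p q, g (σ p) (σ q) = g p q)
    (hfg : ∀ r ∈ R, ∀ q, f r q = g r q) (p q : α) : f p q = g p q := by
  obtain ⟨r, hr, i, rfl⟩ := hR p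
  obtain ⟨q, rfl⟩ := (σ ^ i).surjective q
  rw [apply_zpow_apply_zpow hf, apply_zpow_apply_zpow hg, hfg r hr]

theorem countP_map_of_iff {φ : α → β} {P : α → Prop} {Q : β → Prop} [DecidablePred P]
    [DecidablePred Q] (h : ∀ a, Q (φ a) ↔ P a) (s : Multiset α) :
    (s.map φ).countP Q = s.countP P := by
  rw [Multiset.countP_map, ← Multiset.countP_eq_card_filter]
  exact Multiset.countP_congr rfl fun a _ => propext (h a)

end Invariance

section Develop

variable {α : Type*} {φ : α → α} {k : ℕ} {B : Multiset α}

/-- The development of the base blocks `B` under the iterates `φ^[0], …, φ^[k - 1]`, intended for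
`φ` with `φ^[k] = id`. A block fixed by a smaller iterate is repeated. -/
def develop (φ : α → α) (k : ℕ) (B : Multiset α) : Multiset α :=
  ∑ t ∈ Finset.range k, B.map φ^[t]

theorem card_develop : Multiset.card (develop φ k B) = k * Multiset.card B := by
  simp only [develop, Multiset.card_sum, Multiset.card_map, Finset.sum_const, Finset.card_range,
    smul_eq_mul]

theorem map_develop (hφ : φ^[k] = id) : (develop φ k B).map φ = develop φ k B := by
  have hshift (t : ℕ) : (B.map φ^[t]).map φ = B.map φ^[t + 1] := by
    rw [Multiset.map_map, Function.iterate_succ']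
  calc (develop φ k B).map φ
      = ∑ t ∈ Finset.range k, B.map φ^[t + 1] := by
        simp only [develop, ← Multiset.mapAddMonoidHom_apply φ, map_sum]
        simp only [Multiset.mapAddMonoidHom_apply, hshift]
    _ = develop φ k B := by
        apply add_right_cancel (b := B.map φ^[0])
        rw [← Finset.sum_range_succ' (fun t => B.map φ^[t]), Finset.sum_range_succ, hφ,
          Function.iterate_zero, develop]

theorem forall_mem_develop {P : α → Prop} (hφ : ∀ a, P a → P (φ a)) (hB : ∀ a ∈ B, P a) :
    ∀ a ∈ develop φ k B, P a := by
  intro a ha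
  obtain ⟨t, -, ha⟩ := Multiset.mem_sum.1 ha
  obtain ⟨b, hb, rfl⟩ := Multiset.mem_map.1 ha
  exact Function.Iterate.rec P (hB b hb) hφ t

theorem iterate_multiset_map (φ : α → α) (k : ℕ) :
    (Multiset.map φ)^[k] = Multiset.map φ^[k] := by
  induction k with
  | zero => exact (funext Multiset.map_id).symm
  | succ k ih =>
    funext s
    rw [Function.iterate_succ_apply, ih, Multiset.map_map, Function.iterate_succ]

theorem map_sum_develop_map (hφ : φ^[k] = id) (B : Multiset (Multiset α)) :
    (develop (Multiset.map φ) k B).sum.map φ = (develop (Multiset.map φ) k B).sum := by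
  have hmap : (Multiset.map φ)^[k] = id := by
    rw [iterate_multiset_map, hφ]
    exact funext Multiset.map_id
  calc (develop (Multiset.map φ) k B).sum.map φ
      = ((develop (Multiset.map φ) k B).map (Multiset.map φ)).sum := Multiset.map_join φ _
    _ = (develop (Multiset.map φ) k B).sum := by rw [map_develop hmap]

end Develop

namespace Game

open Equiv (Perm)

variable {n : ℕ} {a b : Fin n × Fin n} {g : Game n}

/-- The game obtained by renaming both the men and the women along the same permutation `σ`. -/
def relabel (σ : Perm (Fin n)) : Game n → Game n :=
  Sym2.map (Prod.map σ σ)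

variable (σ : Perm (Fin n))

theorem relabel_mk : relabel σ s(a, b) = s((σ a.1, σ a.2), (σ b.1, σ b.2)) :=
  rfl

theorem iterate_relabel (k : ℕ) : (relabel σ)^[k] = relabel (σ ^ k) := by
  induction k with
  | zero => simp [relabel]
  | succ k ih =>
    rw [Function.iterate_succ, ih, pow_succ]
    simp only [relabel, ← Sym2.map_comp, Prod.map_comp_map, Equiv.Perm.coe_mul]

variable {σ}

theorem manIn_relabel (m : Fin n) (g : Game n) :
    manIn (σ m) (g.relabel σ) ↔ manIn m g := by
  induction g using Sym2.ind with | _ a b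
  simp [relabel_mk, manIn_mk]

theorem womanIn_relabel (w : Fin n) (g : Game n) :
    womanIn (σ w) (g.relabel σ) ↔ womanIn w g := by
  induction g using Sym2.ind with | _ a b
  simp [relabel_mk, womanIn_mk]

theorem partners_relabel (m w : Fin n) (g : Game n) :
    partners (σ m) (σ w) (g.relabel σ) ↔ partners m w g := by
  induction g using Sym2.ind with | _ a b
  simp [relabel_mk, partners_mk, Prod.ext_iff]

theorem opposesMW_relabel (m w : Fin n) (g : Game n) :
    opposesMW (σ m) (σ w) (g.relabel σ) ↔ opposesMW m w g := by
  induction g using Sym2.ind with | _ a b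
  simp [relabel_mk, opposesMW_mk]

theorem opposesMM_relabel (m m' : Fin n) (g : Game n) :
    opposesMM (σ m) (σ m') (g.relabel σ) ↔ opposesMM m m' g := by
  induction g using Sym2.ind with | _ a b
  simp [relabel_mk, opposesMM_mk]

theorem opposesWW_relabel (w w' : Fin n) (g : Game n) :
    opposesWW (σ w) (σ w') (g.relabel σ) ↔ opposesWW w w' g := by
  induction g using Sym2.ind with | _ a b
  simp [relabel_mk, opposesWW_mk]

end Game

section Symmetry

variable {n : ℕ} {σ μ : Equiv.Perm (Fin n)}

theorem IsRound.map_relabel {r : Multiset (Game n)} (hr : IsRound r) :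
    IsRound (r.map (Game.relabel σ)) := by
  refine ⟨σ.surjective.forall.2 fun m => ?_, σ.surjective.forall.2 fun w => ?_⟩
  · exact (countP_map_of_iff (Game.manIn_relabel m) r).trans_le (hr.1 m)
  · exact (countP_map_of_iff (Game.womanIn_relabel w) r).trans_le (hr.2 w)

theorem mixedCount_apply_apply (h : Commute σ μ) (p q : Fin n) :
    mixedCount μ (σ p) (σ q) = mixedCount μ p q := by
  have hp : μ (σ p) = σ (μ p) := DFunLike.congr_fun h.symm.eq p
  simp only [mixedCount, hp, σ.injective.eq_iff]

theorem sameSexCount_apply_apply (h : Commute σ μ) (p q : Fin n) :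
    sameSexCount μ (σ p) (σ q) = sameSexCount μ p q := by
  have hp : μ (σ p) = σ (μ p) := DFunLike.congr_fun h.symm.eq p
  simp only [sameSexCount, hp, σ.injective.eq_iff]

theorem countP_eq_of_eq_on_representatives {P : Fin n → Fin n → Game n → Prop}
    [∀ p q, DecidablePred (P p q)] (hP : ∀ p q g, P (σ p) (σ q) (Game.relabel σ g) ↔ P p q g)
    {G : Multiset (Game n)} (hG : G.map (Game.relabel σ) = G) {R : Set (Fin n)}
    (hR : ∀ p, ∃ r ∈ R, σ.SameCycle r p) {c : Fin n → Fin n → ℕ}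
    (hc : ∀ p q, c (σ p) (σ q) = c p q) (h : ∀ r ∈ R, ∀ q, G.countP (P r q) = c r q)
    (p q : Fin n) : G.countP (P p q) = c p q := by
  have hinv (p q) : G.countP (P (σ p) (σ q)) = G.countP (P p q) :=
    calc G.countP (P (σ p) (σ q))
        = (G.map (Game.relabel σ)).countP (P (σ p) (σ q)) := by rw [hG]
      _ = G.countP (P p q) := countP_map_of_iff (hP p q) G
  exact eq_of_eq_on_representatives hR hinv hc h p q

end Symmetry

section Decidability

variable {n : ℕ}

instance (m : Fin n) : DecidablePred (Game.manIn m) :=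
  fun g => g.recOnSubsingleton fun _ _ => decidable_of_iff' _ Game.manIn_mk

instance (w : Fin n) : DecidablePred (Game.womanIn w) :=
  fun g => g.recOnSubsingleton fun _ _ => decidable_of_iff' _ Game.womanIn_mk

instance (m w : Fin n) : DecidablePred (Game.partners m w) :=
  fun g => g.recOnSubsingleton fun _ _ => decidable_of_iff' _ Game.partners_mk

instance (m w : Fin n) : DecidablePred (Game.opposesMW m w) :=
  fun g => g.recOnSubsingleton fun _ _ => decidable_of_iff' _ Game.opposesMW_mk

instance (m m' : Fin n) : DecidablePred (Game.opposesMM m m') :=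
  fun g => g.recOnSubsingleton fun _ _ => decidable_of_iff' _ Game.opposesMM_mk

instance (w w' : Fin n) : DecidablePred (Game.opposesWW w w') :=
  fun g => g.recOnSubsingleton fun _ _ => decidable_of_iff' _ Game.opposesWW_mk

theorem isRound_iff {r : Multiset (Game n)} : IsRound r ↔
    (∀ m, r.countP (Game.manIn m) ≤ 1) ∧ ∀ w, r.countP (Game.womanIn w) ≤ 1 := by
  unfold IsRound
  congr!

instance : DecidablePred (IsRound (n := n)) :=
  fun _ => decidable_of_iff' _ isRound_iff

end Decidability

namespace CMDRR16

/-- The symmetry of order five of the tournament; it fixes player `15`. -/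
def rotation : Equiv.Perm (Fin 16) :=
  c[0, 1, 2, 3, 4] * c[5, 6, 7, 8, 9] * c[10, 11, 12, 13, 14]

/-- The permutation exchanging the unspoused players of the same sex who oppose twice; it fixes the
labels `0, …, 4, 15` of the six spouse pairs. -/
def mate : Equiv.Perm (Fin 16) :=
  c[5, 10] * c[6, 11] * c[7, 12] * c[8, 13] * c[9, 14]

/-- The five rounds whose images under the powers of `rotation` form the schedule. -/
def baseRounds : Multiset (Multiset (Game 16)) :=
  {{s((0, 1), (15, 10)), s((1, 9), (10, 14)), s((3, 13), (11, 15)), s((7, 6), (5, 11)),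
      s((13, 2), (14, 12))},
    {s((0, 14), (7, 11)), s((1, 12), (12, 13)), s((10, 6), (15, 4)), s((4, 15), (9, 7)),
      s((3, 0), (6, 1))},
    {s((0, 13), (10, 2)), s((7, 10), (14, 6)), s((2, 8), (6, 11)), s((8, 15), (11, 1)),
      s((5, 12), (15, 5))},
    {s((13, 1), (10, 5)), s((0, 3), (4, 9)), s((7, 4), (12, 12)), s((2, 14), (8, 8)),
      s((6, 7), (11, 2))},
    {s((5, 1), (11, 13)), s((7, 0), (8, 2)), s((6, 8), (10, 9)), s((4, 3), (2, 6)),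
      s((0, 7), (12, 5))}}

/-- The schedule of the tournament. -/
def rounds : Multiset (Multiset (Game 16)) :=
  develop (Multiset.map (Game.relabel rotation)) 5 baseRounds

/-- Representatives of the orbits of `rotation` on the players. -/
def representatives : Finset (Fin 16) :=
  {0, 5, 10, 15}

theorem rotation_pow_five : rotation ^ 5 = 1 := by
  decide +kernel

theorem commute_rotation_mate : Commute rotation mate := by
  have h : rotation * mate = mate * rotation := by decide +kernel
  exact h

theorem exists_representatives_sameCycle (p : Fin 16) :
    ∃ r ∈ (representatives : Set (Fin 16)), rotation.SameCycle r p := by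
  have h : ∀ p, ∃ r ∈ representatives, ∃ i : Fin 5, (rotation ^ (i : ℕ)) r = p := by
    decide +kernel
  obtain ⟨r, hr, i, hi⟩ := h p
  exact ⟨r, hr, i, hi⟩

theorem card_spousePairs_mate : (spousePairs mate).card = 6 := by
  decide +kernel

theorem isRound_and_card_of_mem_baseRounds :
    ∀ r ∈ baseRounds, IsRound r ∧ Multiset.card r = 5 := by
  decide +kernel

theorem isRound_and_card_of_mem_rounds :
    ∀ r ∈ rounds, IsRound r ∧ Multiset.card r = 5 :=
  forall_mem_develop
    (fun r ⟨hround, hcard⟩ => ⟨hround.map_relabel, (Multiset.card_map _ r).trans hcard⟩)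
    isRound_and_card_of_mem_baseRounds

theorem map_relabel_sum_rounds :
    rounds.sum.map (Game.relabel rotation) = rounds.sum := by
  apply map_sum_develop_map
  rw [Game.iterate_relabel, rotation_pow_five]
  exact Sym2.map_id

theorem countP_sum_rounds {P : Fin 16 → Fin 16 → Game 16 → Prop}
    [∀ p q, DecidablePred (P p q)]
    (hP : ∀ p q g, P (rotation p) (rotation q) (g.relabel rotation) ↔ P p q g)
    {c : Fin 16 → Fin 16 → ℕ} (hc : ∀ p q, c (rotation p) (rotation q) = c p q)
    (h : ∀ r ∈ representatives, ∀ q, rounds.sum.countP (P r q) = c r q) (p q : Fin 16) :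
    rounds.sum.countP (P p q) = c p q :=
  countP_eq_of_eq_on_representatives hP map_relabel_sum_rounds
    exists_representatives_sameCycle hc h p q

theorem countP_partners (m w : Fin 16) :
    rounds.sum.countP (Game.partners m w) = mixedCount mate m w :=
  countP_sum_rounds Game.partners_relabel (mixedCount_apply_apply commute_rotation_mate)
    (by decide +kernel) m w

theorem countP_opposesMW (m w : Fin 16) :
    rounds.sum.countP (Game.opposesMW m w) = mixedCount mate m w :=
  countP_sum_rounds Game.opposesMW_relabel (mixedCount_apply_apply commute_rotation_mate)
    (by decide +kernel) m w

theorem countP_opposesMM (m m' : Fin 16) :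
    rounds.sum.countP (Game.opposesMM m m') = sameSexCount mate m m' :=
  countP_sum_rounds Game.opposesMM_relabel (sameSexCount_apply_apply commute_rotation_mate)
    (by decide +kernel) m m'

theorem countP_opposesWW (w w' : Fin 16) :
    rounds.sum.countP (Game.opposesWW w w') = sameSexCount mate w w' :=
  countP_sum_rounds Game.opposesWW_relabel (sameSexCount_apply_apply commute_rotation_mate)
    (by decide +kernel) w w'

theorem isMatedRoundRobin_sum_rounds : IsMatedRoundRobin mate rounds.sum where
  countP_partners m w := by convert countP_partners m w
  countP_opposesMW m w := by convert countP_opposesMW m w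
  countP_opposesMM m m' := by convert countP_opposesMM m m'
  countP_opposesWW w w' := by convert countP_opposesWW w w'

end CMDRR16

/-- There is a CMDRR(16,6) whose 125 games split into 25 rounds of 5 games each. -/
theorem cmdrr_16_6_resolution :
    ∃ T : CMDRR 16 6, ∃ rounds : Multiset (Multiset (Game 16)),
      rounds.sum = T.games ∧ Multiset.card rounds = 25 ∧
      ∀ r ∈ rounds, IsRound r ∧ Multiset.card r = 5 :=
  ⟨CMDRR16.isMatedRoundRobin_sum_rounds.toCMDRR CMDRR16.card_spousePairs_mate,
    CMDRR16.rounds, rfl, card_develop, CMDRR16.isRound_and_card_of_mem_rounds⟩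
end
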